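/- Let F be a balanced double-well potential and let c > 0. There is no C³ solution u : ℝ² → ℝ of Δu + c ∂u/∂y = F'(u) with |u| ≤ 1 and ∂u/∂y > 0 everywhere whose pointwise limits u⁺(x) := lim_{y→+∞} u(x,y) and u⁻(x) := lim_{y→−∞} u(x,y) exist for every x and realize any of the following six configurations for some constants K₁, K₂ ∈ ℝ: (1) u⁺(x) = g(x − K₁) and u⁻ ≡ −1; (2) u⁺(x) = g(K₁ − x) and u⁻ ≡ −1; (3) u⁺ ≡ 1 and u⁻(x) = g(x − K₂); (4) u⁺ ≡ 1 and u⁻(x) = g(K₂ − x); (5) u⁺(x) = g(x − K₁), u⁻(x) = g(x − K₂) with K₁ < K₂; (6) u⁺(x) = g(K₁ − x), u⁻(x) = g(K₂ − x) with K₁ > K₂. -/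

import Mathlib

open Real Filter MeasureTheory Metric

noncomputable def pdx (u : ℝ → ℝ → ℝ) (x y : ℝ) : ℝ := deriv (fun t => u t y) x

noncomputable def pdy (u : ℝ → ℝ → ℝ) (x y : ℝ) : ℝ := deriv (fun t => u x t) y

noncomputable def pdxx (u : ℝ → ℝ → ℝ) (x y : ℝ) : ℝ := deriv (fun t => pdx u t y) x

noncomputable def pdyy (u : ℝ → ℝ → ℝ) (x y : ℝ) : ℝ := deriv (fun t => pdy u x t) y

/-- `F` is a balanced double-well potential. -/
def BalancedDoubleWell (F : ℝ → ℝ) : Prop :=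
  ContDiff ℝ 3 F ∧ deriv F (-1) = 0 ∧ deriv F 1 = 0 ∧
  0 < deriv (deriv F) (-1) ∧ 0 < deriv (deriv F) 1 ∧
  (∀ s ∈ Set.Ioo (-1 : ℝ) 0, 0 < deriv F s) ∧
  (∀ s ∈ Set.Ioo (0 : ℝ) 1, deriv F s < 0) ∧
  F (-1) = 0 ∧ F 1 = 0

/-- `u` is a `C³` solution of `Δu + c uᵧ = F'(u)` on `ℝ²` with `|u| ≤ 1`
which is monotone in `y`. -/
def IsSolution (F : ℝ → ℝ) (c : ℝ) (u : ℝ → ℝ → ℝ) : Prop :=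
  ContDiff ℝ 3 (fun p : ℝ × ℝ => u p.1 p.2) ∧
  (∀ x y : ℝ, pdxx u x y + pdyy u x y + c * pdy u x y = deriv F (u x y)) ∧
  (∀ x y : ℝ, |u x y| ≤ 1) ∧
  (∀ x y : ℝ, 0 < pdy u x y)

/-- A monotone traveling wave solution connecting `-1` to `1`. -/
def IsTravelingWave (F : ℝ → ℝ) (c : ℝ) (u : ℝ → ℝ → ℝ) : Prop :=
  IsSolution F c u ∧
  (∀ x : ℝ, Tendsto (fun y => u x y) atTop (nhds 1)) ∧
  (∀ x : ℝ, Tendsto (fun y => u x y) atBot (nhds (-1)))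

/-- The second derivative test, as a necessary condition at a local maximum. -/
theorem deriv_zero_second_nonpos_of_isLocalMax {f f' : ℝ → ℝ} {a d : ℝ}
    (hf : ∀ x, HasDerivAt f (f' x) x) (hf' : HasDerivAt f' d a) (hm : IsLocalMax f a) :
    f' a = 0 ∧ d ≤ 0 := by
  have h0 : f' a = 0 := hm.hasDerivAt_eq_zero (hf a)
  refine ⟨h0, ?_⟩
  by_contra! hd
  have hfd : deriv f = f' := funext fun x => (hf x).deriv
  have hmin : IsLocalMin f a := isLocalMin_of_deriv_deriv_pos
    (by rw [hfd, hf'.deriv]; exact hd) (by rw [hfd, h0]) (hf a).continuousAt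
  have hconst : f =ᶠ[nhds a] fun _ => f a := by
    filter_upwards [hm, hmin] with x h1 h2 using le_antisymm h1 h2
  have h1 : f' =ᶠ[nhds a] fun _ => 0 := by
    rw [← hfd]
    simpa using hconst.deriv
  have h2 : deriv f' a = 0 := by rw [h1.deriv_eq]; simp
  rw [hf'.deriv] at h2
  exact hd.ne' h2

/-- Comparison of first and second derivatives of two functions touching at `a`. -/
theorem deriv_eq_second_le_of_touching {f f' h h' : ℝ → ℝ} {a d e : ℝ}
    (hf : ∀ x, HasDerivAt f (f' x) x) (hf' : HasDerivAt f' d a)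
    (hh : ∀ x, HasDerivAt h (h' x) x) (hh' : HasDerivAt h' e a)
    (hle : ∀ᶠ x in nhds a, f x - h x ≤ f a - h a) : f' a = h' a ∧ d ≤ e := by
  have := deriv_zero_second_nonpos_of_isLocalMax (f := fun x => f x - h x)
    (f' := fun x => f' x - h' x) (fun x => (hf x).sub (hh x)) (hf'.sub hh') hle
  exact ⟨by linarith [this.1], by linarith [this.2]⟩

/-- `u` is continuous on the plane and has first and second pure partial derivatives. -/
structure HasPurePartials (u ux uy uxx uyy : ℝ → ℝ → ℝ) : Prop where
  cont : Continuous fun p : ℝ × ℝ => u p.1 p.2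
  dx : ∀ x y, HasDerivAt (fun t => u t y) (ux x y) x
  dy : ∀ x y, HasDerivAt (fun t => u x t) (uy x y) y
  dxx : ∀ x y, HasDerivAt (fun t => ux t y) (uxx x y) x
  dyy : ∀ x y, HasDerivAt (fun t => uy x t) (uyy x y) y

namespace HasPurePartials

variable {u ux uy uxx uyy v vx vy vxx vyy : ℝ → ℝ → ℝ}

theorem swap (h : HasPurePartials u ux uy uxx uyy) :
    HasPurePartials (fun x y => u y x) (fun x y => uy y x) (fun x y => ux y x)
      (fun x y => uyy y x) (fun x y => uxx y x) where
  cont := h.cont.comp (continuous_snd.prodMk continuous_fst)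
  dx x y := h.dy y x
  dy x y := h.dx y x
  dxx x y := h.dyy y x
  dyy x y := h.dxx y x

theorem sub (h : HasPurePartials u ux uy uxx uyy) (k : HasPurePartials v vx vy vxx vyy) :
    HasPurePartials (fun x y => u x y - v x y) (fun x y => ux x y - vx x y)
      (fun x y => uy x y - vy x y) (fun x y => uxx x y - vxx x y)
      (fun x y => uyy x y - vyy x y) where
  cont := h.cont.sub k.cont
  dx x y := (h.dx x y).sub (k.dx x y)
  dy x y := (h.dy x y).sub (k.dy x y)
  dxx x y := (h.dxx x y).sub (k.dxx x y)
  dyy x y := (h.dyy x y).sub (k.dyy x y)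

theorem reflect_shift (h : HasPurePartials u ux uy uxx uyy) (l s : ℝ) :
    HasPurePartials (fun x y => u (2 * l - x) (y + s)) (fun x y => -ux (2 * l - x) (y + s))
      (fun x y => uy (2 * l - x) (y + s)) (fun x y => uxx (2 * l - x) (y + s))
      (fun x y => uyy (2 * l - x) (y + s)) where
  cont := h.cont.comp (f := fun p : ℝ × ℝ => (2 * l - p.1, p.2 + s)) (by fun_prop)
  dx x y := HasDerivAt.comp_const_sub (2 * l) x (h.dx (2 * l - x) (y + s))
  dy x y := HasDerivAt.comp_add_const y s (h.dy (2 * l - x) (y + s))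
  dxx x y := by
    simpa using (HasDerivAt.comp_const_sub (2 * l) x (h.dxx (2 * l - x) (y + s))).fun_neg
  dyy x y := HasDerivAt.comp_add_const y s (h.dyy (2 * l - x) (y + s))

theorem point_reflect_neg (h : HasPurePartials u ux uy uxx uyy) :
    HasPurePartials (fun x y => -u (-x) (-y)) (fun x y => ux (-x) (-y))
      (fun x y => uy (-x) (-y)) (fun x y => -uxx (-x) (-y))
      (fun x y => -uyy (-x) (-y)) where
  cont := (h.cont.comp (f := fun p : ℝ × ℝ => (-p.1, -p.2)) (by fun_prop)).neg
  dx x y := ((h.dx (-x) (-y)).comp x (hasDerivAt_neg x)).fun_neg.congr_deriv (by ring)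
  dy x y := ((h.dy (-x) (-y)).comp y (hasDerivAt_neg y)).fun_neg.congr_deriv (by ring)
  dxx x y := ((h.dxx (-x) (-y)).comp x (hasDerivAt_neg x)).congr_deriv (by ring)
  dyy x y := ((h.dyy (-x) (-y)).comp y (hasDerivAt_neg y)).congr_deriv (by ring)

end HasPurePartials

/-- A function maximized over a compact set dominating it elsewhere has a global maximum. -/
theorem exists_max_of_compact {E : Type*} [TopologicalSpace E] {S C : Set E} {f : E → ℝ} {p : E}
    (hC : IsCompact C) (hf : ContinuousOn f C) (hCS : C ⊆ S) (hp : p ∈ C)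
    (hout : ∀ q ∈ S, q ∉ C → f q ≤ f p) : ∃ q ∈ S, ∀ r ∈ S, f r ≤ f q := by
  obtain ⟨q, hq, hmax⟩ := hC.exists_isMaxOn ⟨p, hp⟩ hf
  refine ⟨q, hCS hq, fun r hr => ?_⟩
  by_cases h : r ∈ C
  · exact hmax h
  · exact (hout r hr h).trans (hmax hp)

/-- Interior gradient bound for bounded solutions, by doubling the variable `x`. -/
theorem partial_x_le_of_bounded {u ux uy uxx uyy : ℝ → ℝ → ℝ} {a b K : ℝ}
    (h : HasPurePartials u ux uy uxx uyy) (hu : ∀ x y, |u x y| ≤ 1)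
    (hK : ∀ x y, |uxx x y + uyy x y + a * ux x y + b * uy x y| ≤ K) (x₁ y₁ : ℝ) :
    ux x₁ y₁ ≤ K + 2 := by
  have hK0 : 0 ≤ K := (abs_nonneg _).trans (hK 0 0)
  set A := K + 2 with hA
  have hub : ∀ x y, -1 ≤ u x y ∧ u x y ≤ 1 := fun x y => abs_le.1 (hu x y)
  obtain ⟨r, hr0, hr1, hr⟩ : ∃ r : ℝ, 0 < r ∧ r ≤ 1 ∧ r * (2 + 4 * |a| + 4 * |b|) < 4 := by
    have hpos : 0 < 2 + 4 * |a| + 4 * |b| := by positivity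
    refine ⟨min 1 (2 / (2 + 4 * |a| + 4 * |b|)), by positivity, min_le_left _ _, ?_⟩
    calc _ ≤ 2 / (2 + 4 * |a| + 4 * |b|) * (2 + 4 * |a| + 4 * |b|) := by
          gcongr; exact min_le_right _ _
      _ = 2 := by field_simp
      _ < 4 := by norm_num
  have key : ∀ t ∈ Set.Icc (0 : ℝ) 1, u (x₁ + t) y₁ - u (x₁ - t) y₁ ≤ A * t * (2 - t) := by
    by_contra! hcon
    obtain ⟨t₁, ht₁, hlt⟩ := hcon
    let f : ℝ × ℝ × ℝ → ℝ := fun p => u (p.1 + p.2.2) p.2.1 - u (p.1 - p.2.2) p.2.1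
      - A * p.2.2 * (2 - p.2.2) - r ^ 2 * ((p.1 - x₁) ^ 2 + (p.2.1 - y₁) ^ 2)
    let S : Set (ℝ × ℝ × ℝ) := Set.univ ×ˢ Set.univ ×ˢ Set.Icc (0 : ℝ) 1
    let C : Set (ℝ × ℝ × ℝ) := Set.Icc (x₁ - 2 / r) (x₁ + 2 / r) ×ˢ
      Set.Icc (y₁ - 2 / r) (y₁ + 2 / r) ×ˢ Set.Icc (0 : ℝ) 1
    have hfc : Continuous f := by
      have h1 : Continuous fun p : ℝ × ℝ × ℝ => u (p.1 + p.2.2) p.2.1 :=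
        h.cont.comp (f := fun p : ℝ × ℝ × ℝ => (p.1 + p.2.2, p.2.1)) (by fun_prop)
      have h2 : Continuous fun p : ℝ × ℝ × ℝ => u (p.1 - p.2.2) p.2.1 :=
        h.cont.comp (f := fun p : ℝ × ℝ × ℝ => (p.1 - p.2.2, p.2.1)) (by fun_prop)
      exact ((h1.sub h2).sub (by fun_prop)).sub (by fun_prop)
    have hfp : 0 < f (x₁, y₁, t₁) := by simp only [f]; simp; linarith
    have hAt : ∀ t ∈ Set.Icc (0 : ℝ) 1, 0 ≤ A * t * (2 - t) := fun t ht => by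
      have := ht.1; have := ht.2; have : 0 ≤ 2 - t := by linarith
      positivity
    have hbd : ∀ x y t, t ∈ Set.Icc (0 : ℝ) 1 → 0 < f (x, y, t) →
        (r * (x - x₁)) ^ 2 + (r * (y - y₁)) ^ 2 ≤ 2 := fun x y t ht hp => by
      have h1 := hub (x + t) y
      have h2 := hub (x - t) y
      have := hAt t ht
      simp only [f] at hp
      nlinarith
    have hbd' : ∀ x y t, t ∈ Set.Icc (0 : ℝ) 1 → 0 < f (x, y, t) →
        |r * (x - x₁)| ≤ 2 ∧ |r * (y - y₁)| ≤ 2 := fun x y t ht hp => by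
      have := hbd x y t ht hp
      constructor <;> apply abs_le_of_sq_le_sq <;> nlinarith [sq_nonneg (r * (x - x₁)),
        sq_nonneg (r * (y - y₁))]
    obtain ⟨⟨x, y, t⟩, hqS, hmax⟩ : ∃ q ∈ S, ∀ p ∈ S, f p ≤ f q := by
      refine exists_max_of_compact (C := C) (p := (x₁, y₁, t₁))
        (isCompact_Icc.prod (isCompact_Icc.prod isCompact_Icc)) hfc.continuousOn ?_ ?_ ?_
      · rintro ⟨x, y, t⟩ hp
        exact ⟨trivial, trivial, hp.2.2⟩
      · have : 0 ≤ 2 / r := by positivity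
        exact ⟨⟨by simp [this], by simp [this]⟩, ⟨by simp [this], by simp [this]⟩, ht₁⟩
      · rintro ⟨x, y, t⟩ hp hn
        refine le_of_not_gt fun hlt' => hn ?_
        have ht := hp.2.2
        obtain ⟨h1, h2⟩ := hbd' x y t ht (hfp.trans hlt')
        rw [abs_mul, abs_of_pos hr0, ← le_div_iff₀' hr0, abs_le] at h1 h2
        exact ⟨⟨by simp only []; linarith, by simp only []; linarith⟩,
          ⟨by simp only []; linarith, by simp only []; linarith⟩, ht⟩
    have ht : t ∈ Set.Icc (0 : ℝ) 1 := hqS.2.2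
    have hpos : 0 < f (x, y, t) := hfp.trans_le (hmax _ ⟨trivial, trivial, ht₁⟩)
    have ht0 : 0 < t := by
      refine lt_of_le_of_ne ht.1 fun h0 => ?_
      subst h0
      simp only [f] at hpos
      simp at hpos
      nlinarith [sq_nonneg (r * (x - x₁)), sq_nonneg (r * (y - y₁))]
    have ht1 : t < 1 := by
      refine lt_of_le_of_ne ht.2 fun h0 => ?_
      subst h0
      simp only [f] at hpos
      nlinarith [sq_nonneg (r * (x - x₁)), sq_nonneg (r * (y - y₁)), hub (x + 1) y,
        hub (x - 1) y]
    have hx := deriv_eq_second_le_of_touching (f := fun s => u (s + t) y - u (s - t) y)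
      (f' := fun s => ux (s + t) y - ux (s - t) y) (a := x)
      (h := fun s => r ^ 2 * (s - x₁) ^ 2) (h' := fun s => r ^ 2 * (2 * (s - x₁)))
      (d := uxx (x + t) y - uxx (x - t) y) (e := r ^ 2 * 2)
      (fun s => (HasDerivAt.comp_add_const s t (h.dx (s + t) y)).sub
        (HasDerivAt.comp_sub_const s t (h.dx (s - t) y)))
      ((HasDerivAt.comp_add_const x t (h.dxx (x + t) y)).sub
        (HasDerivAt.comp_sub_const x t (h.dxx (x - t) y)))
      (fun s => by
        simpa using (((hasDerivAt_id s).sub_const x₁).pow 2).const_mul (r ^ 2))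
      (by simpa using (((hasDerivAt_id x).sub_const x₁).const_mul 2).const_mul (r ^ 2))
      (Filter.Eventually.of_forall fun s => by
        have := hmax (s, y, t) ⟨trivial, trivial, ht⟩
        simp only [f] at this
        linarith)
    have hy := deriv_eq_second_le_of_touching (f := fun s => u (x + t) s - u (x - t) s)
      (f' := fun s => uy (x + t) s - uy (x - t) s) (a := y)
      (h := fun s => r ^ 2 * (s - y₁) ^ 2) (h' := fun s => r ^ 2 * (2 * (s - y₁)))
      (d := uyy (x + t) y - uyy (x - t) y) (e := r ^ 2 * 2)
      (fun s => (h.dy (x + t) s).sub (h.dy (x - t) s))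
      ((h.dyy (x + t) y).sub (h.dyy (x - t) y))
      (fun s => by
        simpa using (((hasDerivAt_id s).sub_const y₁).pow 2).const_mul (r ^ 2))
      (by simpa using (((hasDerivAt_id y).sub_const y₁).const_mul 2).const_mul (r ^ 2))
      (Filter.Eventually.of_forall fun s => by
        have := hmax (x, s, t) ⟨trivial, trivial, ht⟩
        simp only [f] at this
        linarith)
    have htt := deriv_eq_second_le_of_touching (f := fun s => u (x + s) y - u (x - s) y)
      (f' := fun s => ux (x + s) y - -ux (x - s) y) (a := t)
      (h := fun s => A * s * (2 - s)) (h' := fun s => A * (2 - 2 * s))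
      (d := uxx (x + t) y - uxx (x - t) y) (e := A * (- 2))
      (fun s => (HasDerivAt.comp_const_add x s (h.dx (x + s) y)).sub
        (HasDerivAt.comp_const_sub x s (h.dx (x - s) y)))
      (by
        have := (HasDerivAt.comp_const_add x t (h.dxx (x + t) y)).fun_sub
          (HasDerivAt.comp_const_sub x t (h.dxx (x - t) y)).fun_neg
        simpa using this)
      (fun s => by
        have := ((hasDerivAt_id s).const_mul A).mul ((hasDerivAt_id s).const_sub 2)
        exact this.congr_deriv (by simp only [id]; ring))
      (by
        have := (((hasDerivAt_id t).const_mul 2).const_sub 2).const_mul A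
        simpa using this)
      (by
        filter_upwards [Icc_mem_nhds ht0 ht1] with s hs
        have := hmax (x, y, s) ⟨trivial, trivial, hs⟩
        simp only [f] at this
        linarith)
    obtain ⟨hX, hY⟩ := hbd' x y t ht hpos
    have e1 := abs_le.1 (hK (x + t) y)
    have e2 := abs_le.1 (hK (x - t) y)
    have g1 : a * (ux (x + t) y - ux (x - t) y) ≤ r * (4 * |a|) := by
      rw [hx.1]
      calc _ = 2 * r * (a * (r * (x - x₁))) := by ring
        _ ≤ 2 * r * (|a| * 2) := by
          refine mul_le_mul_of_nonneg_left ((le_abs_self _).trans ?_) (by positivity)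
          rw [abs_mul]
          gcongr
        _ = _ := by ring
    have g2 : b * (uy (x + t) y - uy (x - t) y) ≤ r * (4 * |b|) := by
      rw [hy.1]
      calc _ = 2 * r * (b * (r * (y - y₁))) := by ring
        _ ≤ 2 * r * (|b| * 2) := by
          refine mul_le_mul_of_nonneg_left ((le_abs_self _).trans ?_) (by positivity)
          rw [abs_mul]
          gcongr
        _ = _ := by ring
    have g3 : r ^ 2 ≤ r := by nlinarith
    nlinarith [hy.2, htt.2]
  have hd : HasDerivAt (fun t => A * t * (2 - t) - (u (x₁ + t) y₁ - u (x₁ - t) y₁))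
      (2 * A - 2 * ux x₁ y₁) 0 := by
    have h1 := (HasDerivAt.comp_const_add x₁ 0 (by simpa using h.dx x₁ y₁)).sub
        (HasDerivAt.comp_const_sub x₁ 0 (by simpa using h.dx x₁ y₁))
    have h2 := ((hasDerivAt_id (0 : ℝ)).const_mul A).mul ((hasDerivAt_id (0 : ℝ)).const_sub 2)
    exact (h2.sub h1).congr_deriv (by simp only [id]; ring)
  have hslope := (hasDerivAt_iff_tendsto_slope.1 hd).mono_left
    (nhdsWithin_mono (0 : ℝ) (s := Set.Ioi 0) fun t ht => (ne_of_gt ht : t ≠ 0))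
  have hnn : 0 ≤ 2 * A - 2 * ux x₁ y₁ := by
    refine ge_of_tendsto hslope ?_
    filter_upwards [Ioc_mem_nhdsGT (zero_lt_one' ℝ)] with t ht
    have := key t ⟨ht.1.le, ht.2⟩
    rw [slope_def_field]
    simp only [sub_zero, mul_zero, zero_mul, add_zero, sub_self]
    exact div_nonneg (by linarith) ht.1.le
  linarith

set_option maxHeartbeats 1000000 in
/-- A maximum principle in a half-plane: the zero order coefficient has a good sign except in a
narrow strip along the boundary. -/
theorem nonpos_of_narrow_strip {w wx wy wxx wyy : ℝ → ℝ → ℝ} {l c K κ B : ℝ}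
    (h : HasPurePartials w wx wy wxx wyy) (hK : 0 ≤ K) (hκ : 0 < κ)
    (hB : ∀ x y, w x y ≤ B) (hl : ∀ y, w l y ≤ 0)
    (hw : ∀ x y, x < l → 0 < w x y →
      κ * w x y ≤ wxx x y + wyy x y + c * wy x y ∨
      l - 1 / (6 * K + 3) ≤ x ∧ -K * w x y ≤ wxx x y + wyy x y + c * wy x y)
    (x₁ y₁ : ℝ) (hx₁ : x₁ ≤ l) : w x₁ y₁ ≤ 0 := by
  by_contra! hpos
  set a := 6 * K + 3 with ha
  have ha0 : 0 < a := by positivity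
  have hB0 : 0 < B := hpos.trans_le (hB _ _)
  let ψ : ℝ → ℝ := fun x => 2 - exp (a * (x - l))
  have hψc : Continuous ψ := by fun_prop
  have hψ1 : ∀ x, x ≤ l → 1 ≤ ψ x := fun x hx => by
    have : exp (a * (x - l)) ≤ 1 := exp_le_one_iff.2 (mul_nonpos_of_nonneg_of_nonpos ha0.le
      (by linarith))
    simp only [ψ]; linarith
  have hψ2 : ∀ x, ψ x ≤ 2 := fun x => by
    have := exp_pos (a * (x - l))
    simp only [ψ]; linarith
  have hψ' : ∀ x, HasDerivAt ψ (-(a * exp (a * (x - l)))) x := fun x => by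
    have := ((((hasDerivAt_id x).sub_const l).const_mul a).exp).const_sub 2
    exact this.congr_deriv (by simp only [id]; ring)
  have hψ'' : ∀ x, HasDerivAt (fun x => -(a * exp (a * (x - l))))
      (-(a * (a * exp (a * (x - l))))) x := fun x => by
    have := (((((hasDerivAt_id x).sub_const l).const_mul a).exp).const_mul a).fun_neg
    exact this.congr_deriv (by simp only [id]; ring)
  set m := w x₁ y₁ / 2 with hm
  have hm0 : 0 < m := by positivity
  set k := min κ 1 with hk
  have hk0 : 0 < k := lt_min hκ one_pos
  set D := 8 + 4 * (a + |c|) * (B + 1) with hD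
  have hD0 : 0 < D := by positivity
  obtain ⟨r, hr0, hr1, hr⟩ : ∃ r : ℝ, 0 < r ∧ r ≤ 1 ∧ r * D < m * k := by
    refine ⟨min 1 (m * k / D / 2), by positivity, min_le_left _ _, ?_⟩
    calc _ ≤ m * k / D / 2 * D := by
          gcongr; exact min_le_right _ _
      _ = m * k / 2 := by field_simp
      _ < m * k := by linarith [mul_pos hm0 hk0]
  let f : ℝ × ℝ → ℝ := fun p => w p.1 p.2 / ψ p.1 - r ^ 2 * ((p.1 - x₁) ^ 2 + (p.2 - y₁) ^ 2)
  let S : Set (ℝ × ℝ) := Set.Iic l ×ˢ Set.univ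
  let R := (B + 1) / r
  have hR : 0 ≤ R := by positivity
  let C : Set (ℝ × ℝ) := Set.Icc (x₁ - R) l ×ˢ Set.Icc (y₁ - R) (y₁ + R)
  have hfp : m ≤ f (x₁, y₁) := by
    simp only [f, hm]
    simp only [sub_self]
    have : w x₁ y₁ / 2 ≤ w x₁ y₁ / ψ x₁ :=
      div_le_div_of_nonneg_left hpos.le (one_pos.trans_le (hψ1 x₁ hx₁)) (hψ2 x₁)
    linarith
  have hv : ∀ x y, x ≤ l → w x y / ψ x ≤ B := fun x y hx => by
    rw [div_le_iff₀ (one_pos.trans_le (hψ1 x hx))]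
    nlinarith [hB x y, hψ1 x hx]
  have hbd : ∀ x y, x ≤ l → 0 < f (x, y) → |r * (x - x₁)| ≤ B + 1 ∧ |r * (y - y₁)| ≤ B + 1 :=
      fun x y hx hp => by
    have := hv x y hx
    simp only [f] at hp
    constructor <;> apply abs_le_of_sq_le_sq <;> nlinarith [sq_nonneg (r * (x - x₁)),
        sq_nonneg (r * (y - y₁))]
  obtain ⟨⟨x, y⟩, hqS, hmax⟩ : ∃ q ∈ S, ∀ p ∈ S, f p ≤ f q := by
    refine exists_max_of_compact (C := C) (p := (x₁, y₁)) (isCompact_Icc.prod isCompact_Icc)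
      ?_ ?_ ?_ ?_
    · refine (h.cont.continuousOn.div (by fun_prop) ?_).sub (by fun_prop)
      rintro ⟨x, y⟩ hp
      exact (one_pos.trans_le (hψ1 x hp.1.2)).ne'
    · rintro ⟨x, y⟩ hp
      exact ⟨hp.1.2, trivial⟩
    · exact ⟨⟨by simp [hR], hx₁⟩, ⟨by simp [hR], by simp [hR]⟩⟩
    · rintro ⟨x, y⟩ hp hn
      refine le_of_not_gt fun hlt' => hn ?_
      obtain ⟨h1, h2⟩ := hbd x y hp.1 (hm0.trans_le hfp |>.trans hlt')
      rw [abs_mul, abs_of_pos hr0, ← le_div_iff₀' hr0, abs_le] at h1 h2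
      exact ⟨⟨by simp only [R]; linarith, hp.1⟩,
          ⟨by simp only [R]; linarith, by simp only [R]; linarith⟩⟩
  have hxl : x ≤ l := hqS.1
  have hfq : m ≤ f (x, y) := hfp.trans (hmax _ ⟨hx₁, trivial⟩)
  set q := w x y / ψ x with hq
  have hψx0 : 0 < ψ x := one_pos.trans_le (hψ1 x hxl)
  have hwq : w x y = q * ψ x := by rw [hq]; field_simp
  have hmq : m ≤ q := by
    have : f (x, y) = q - r ^ 2 * ((x - x₁) ^ 2 + (y - y₁) ^ 2) := rfl
    nlinarith [sq_nonneg (r * (x - x₁)), sq_nonneg (r * (y - y₁))]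
  have hwpos : 0 < w x y := by rw [hwq]; exact mul_pos (hm0.trans_le hmq) hψx0
  have hxlt : x < l := by
    refine lt_of_le_of_ne hxl fun h0 => ?_
    subst h0
    exact (hl y).not_gt hwpos
  have htouch : ∀ s t, s ≤ l → w s t ≤ (f (x, y) + r ^ 2 * ((s - x₁) ^ 2 + (t - y₁) ^ 2)) * ψ s :=
      fun s t hs => by
    have := hmax (s, t) ⟨hs, trivial⟩
    rw [← div_le_iff₀ (one_pos.trans_le (hψ1 s hs))]
    simp only [f] at this ⊢
    linarith
  set μ := f (x, y) with hμ
  have hqμ : q = μ + r ^ 2 * ((x - x₁) ^ 2 + (y - y₁) ^ 2) := by simp only [hμ, f, hq]; ring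
  have hX := deriv_eq_second_le_of_touching (f := fun s => w s y) (f' := fun s => wx s y) (a := x)
    (h := fun s => (μ + r ^ 2 * ((s - x₁) ^ 2 + (y - y₁) ^ 2)) * ψ s)
    (h' := fun s => (r ^ 2 * (2 * (s - x₁))) * ψ s +
      (μ + r ^ 2 * ((s - x₁) ^ 2 + (y - y₁) ^ 2)) * (-(a * exp (a * (s - l)))))
    (d := wxx x y)
    (e := (r ^ 2 * 2) * ψ x + (r ^ 2 * (2 * (x - x₁))) * (-(a * exp (a * (x - l)))) +
      ((r ^ 2 * (2 * (x - x₁))) * (-(a * exp (a * (x - l)))) +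
        q * (-(a * (a * exp (a * (x - l)))))))
    (fun s => h.dx s y) (h.dxx x y)
    (fun s => by
      have h1 : HasDerivAt (fun s => μ + r ^ 2 * ((s - x₁) ^ 2 + (y - y₁) ^ 2))
          (r ^ 2 * (2 * (s - x₁))) s :=
        ((((((hasDerivAt_id s).sub_const x₁).pow 2).add_const ((y - y₁) ^ 2)).const_mul
          (r ^ 2)).const_add μ).congr_deriv (by simp)
      exact h1.mul (hψ' s))
    (by
      have h1 : HasDerivAt (fun s => μ + r ^ 2 * ((s - x₁) ^ 2 + (y - y₁) ^ 2))
          (r ^ 2 * (2 * (x - x₁))) x :=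
        ((((((hasDerivAt_id x).sub_const x₁).pow 2).add_const ((y - y₁) ^ 2)).const_mul
          (r ^ 2)).const_add μ).congr_deriv (by simp)
      have h2 : HasDerivAt (fun s => r ^ 2 * (2 * (s - x₁))) (r ^ 2 * 2) x :=
        ((((hasDerivAt_id x).sub_const x₁).const_mul 2).const_mul (r ^ 2)).congr_deriv (by simp)
      have := (h2.mul (hψ' x)).add (h1.mul (hψ'' x))
      rw [← hqμ] at this
      exact this)
    (by
      filter_upwards [Iio_mem_nhds hxlt] with s hs
      have := htouch s y (le_of_lt hs)
      rw [← hqμ, hwq]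
      linarith)
  have hY := deriv_eq_second_le_of_touching (f := fun s => w x s) (f' := fun s => wy x s) (a := y)
    (h := fun s => (μ + r ^ 2 * ((x - x₁) ^ 2 + (s - y₁) ^ 2)) * ψ x)
    (h' := fun s => (r ^ 2 * (2 * (s - y₁))) * ψ x) (d := wyy x y) (e := (r ^ 2 * 2) * ψ x)
    (fun s => h.dy x s) (h.dyy x y)
    (fun s => (((((((hasDerivAt_id s).sub_const y₁).pow 2).const_add ((x - x₁) ^ 2)).const_mul
          (r ^ 2)).const_add μ).mul_const (ψ x)).congr_deriv (by simp))
    (((((hasDerivAt_id y).sub_const y₁).const_mul 2).const_mul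
      (r ^ 2)).mul_const (ψ x) |>.congr_deriv (by simp))
    (Filter.Eventually.of_forall fun s => by
      have := htouch x s hxl
      rw [← hqμ, hwq]
      linarith)
  obtain ⟨hbx, hby⟩ := hbd x y hxl (hm0.trans_le hfq)
  set e := exp (a * (x - l)) with he
  have he0 : 0 < e := exp_pos _
  have he1 : e ≤ 1 := exp_le_one_iff.2 (mul_nonpos_of_nonneg_of_nonpos ha0.le (by linarith))
  have g1 : r ^ 2 * (2 * (x - x₁)) * (-(a * e)) ≤ 2 * r * (a * (B + 1)) := by
    calc _ = 2 * r * ((a * e) * (-(r * (x - x₁)))) := by ring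
      _ ≤ 2 * r * ((a * 1) * (B + 1)) := by
        refine mul_le_mul_of_nonneg_left ?_ (by positivity)
        refine (mul_le_mul_of_nonneg_left ((neg_le_abs _).trans hbx) (by positivity)).trans ?_
        gcongr
      _ = _ := by ring
  have g2 : c * wy x y ≤ 4 * r * (|c| * (B + 1)) := by
    rw [hY.1]
    calc _ = 2 * r * ψ x * (c * (r * (y - y₁))) := by ring
      _ ≤ 2 * r * ψ x * (|c| * (B + 1)) := by
        refine mul_le_mul_of_nonneg_left ((le_abs_self _).trans ?_) (by positivity)
        rw [abs_mul]
        gcongr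
      _ ≤ 2 * r * 2 * (|c| * (B + 1)) := by
        gcongr
        exact hψ2 x
      _ = _ := by ring
  have g3 : r ^ 2 * 2 * ψ x ≤ 4 * r := by
    have : r ^ 2 ≤ r := by nlinarith
    calc r ^ 2 * 2 * ψ x ≤ r * 2 * 2 := by gcongr; exact hψ2 x
      _ = _ := by ring
  have hsum : wxx x y + wyy x y + c * wy x y ≤ r * D - q * (a * (a * e)) := by
    rw [hD]
    nlinarith [hX.2, hY.2]
  have hq0 : 0 < q := hm0.trans_le hmq
  have hfin : q * k ≤ r * D := by
    rcases hw x y hxlt hwpos with h1 | ⟨h1, h2⟩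
    · have hkκ : k ≤ κ := min_le_left _ _
      have : q * k ≤ κ * w x y := by
        rw [hwq]
        calc q * k ≤ q * κ := by gcongr
          _ ≤ q * κ * ψ x := le_mul_of_one_le_right (by positivity) (hψ1 x hxl)
          _ = _ := by ring
      have : 0 ≤ q * (a * (a * e)) := by positivity
      linarith
    · have hexp : (1 / 3 : ℝ) ≤ e := by
        have h3 : exp (-1) ≤ e := by
          rw [he, exp_le_exp]
          have : a * (l - 1 / a - l) ≤ a * (x - l) := by gcongr
          have h4 : a * (l - 1 / a - l) = -1 := by field_simp; ring
          linarith
        have h5 : exp 1 ≤ 3 := by linarith [exp_one_lt_d9]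
        rw [exp_neg] at h3
        refine le_trans ?_ h3
        rw [one_div]
        exact inv_anti₀ (exp_pos _) h5
      have h6 : 2 * K + 1 ≤ a * (a * e) := by
        calc 2 * K + 1 ≤ a * 1 := by rw [ha]; linarith
          _ ≤ a * (3 * (1 / 3)) := by norm_num
          _ ≤ a * (a * e) := by
            gcongr
            rw [ha]; linarith
      have h7 : -(q * (2 * K)) ≤ -K * w x y := by
        rw [hwq]
        have := mul_le_mul_of_nonneg_left (hψ2 x) (by positivity : 0 ≤ q * K)
        linarith
      have h8 := mul_le_mul_of_nonneg_left h6 hq0.le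
      have hk1 : k ≤ 1 := min_le_right _ _
      have h9 := mul_le_mul_of_nonneg_left hk1 hq0.le
      linarith
  have := mul_le_mul_of_nonneg_right hmq hk0.le
  linarith

/-- A quantitative strong maximum principle: a nonnegative supersolution in a half-plane which is
positive on the boundary line is positive inside. -/
theorem pos_of_pos_on_boundary_line {z zx zy zxx zyy : ℝ → ℝ → ℝ} {l c K : ℝ}
    (h : HasPurePartials z zx zy zxx zyy) (hK : 0 ≤ K)
    (hz : ∀ x y, x ≤ l → 0 ≤ z x y) (hl : ∀ y, 0 < z l y)
    (hs : ∀ x y, x < l → zxx x y + zyy x y + c * zy x y ≤ K * z x y)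
    (x₀ y₀ : ℝ) (hx₀ : x₀ < l) : 0 < z x₀ y₀ := by
  set b := l - x₀ + 1 with hb
  have hb0 : 0 < b := by linarith
  obtain ⟨η, hη0, hη⟩ : ∃ η > 0, ∀ y ∈ Set.Icc (y₀ - b - 1) (y₀ + b + 1), η ≤ z l y := by
    obtain ⟨y, hy, hmin⟩ := (isCompact_Icc (a := y₀ - b - 1) (b := y₀ + b + 1)).exists_isMinOn
      ⟨y₀, by constructor <;> linarith⟩
      (h.cont.comp (f := fun t : ℝ => (l, t)) (by fun_prop)).continuousOn
    exact ⟨z l y, hl y, fun t ht => hmin ht⟩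
  set α := 2 + c ^ 2 + K + 1 with hα
  have hα0 : 0 < α := by positivity
  set τ := η / exp (α * b) with hτ
  have hτ0 : 0 < τ := by positivity
  let φ : ℝ → ℝ → ℝ := fun x y => x - x₀ + 1 - (y - y₀) ^ 2
  let E : ℝ → ℝ → ℝ := fun x y => exp (α * φ x y)
  have hEx : ∀ x y, HasDerivAt (fun t => E t y) (α * E x y) x := fun x y =>
    ((((((hasDerivAt_id x).sub_const x₀).add_const 1).sub_const ((y - y₀) ^ 2)).const_mul
      α).exp).congr_deriv (by simp only [E, φ, id]; ring)
  have hEy : ∀ x y, HasDerivAt (fun t => E x t) (α * (-(2 * (y - y₀))) * E x y) y := fun x y =>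
    ((((((hasDerivAt_id y).sub_const y₀).pow 2).const_sub (x - x₀ + 1)).const_mul
      α).exp).congr_deriv (by simp [E, φ]; ring)
  have hEyy : ∀ x y, HasDerivAt (fun t => α * (-(2 * (t - y₀))) * E x t)
      (α * (-2) * E x y + α * (-(2 * (y - y₀))) * (α * (-(2 * (y - y₀))) * E x y)) y := fun x y =>
    (((((hasDerivAt_id y).sub_const y₀).const_mul 2).fun_neg.const_mul α).mul
      (hEy x y)).congr_deriv (by simp)
  have hEc : Continuous fun p : ℝ × ℝ => E p.1 p.2 := by simp only [E, φ]; fun_prop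
  let C : Set (ℝ × ℝ) := (Set.Icc (x₀ - 1) l ×ˢ Set.Icc (y₀ - b - 1) (y₀ + b + 1)) ∩
    {p | 0 ≤ φ p.1 p.2}
  have hCc : IsCompact C := (isCompact_Icc.prod isCompact_Icc).inter_right
    (isClosed_le continuous_const (by simp only [φ]; fun_prop))
  have hmem : ∀ x y, x ≤ l → 0 ≤ φ x y → (x, y) ∈ C := fun x y hx hp => by
    have hp' : 0 ≤ x - x₀ + 1 - (y - y₀) ^ 2 := hp
    have hy : |y - y₀| ≤ b + 1 := abs_le_of_sq_le_sq (by nlinarith) (by linarith)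
    rw [abs_le] at hy
    refine ⟨⟨⟨?_, hx⟩, ⟨?_, ?_⟩⟩, hp⟩
    · have := sq_nonneg (y - y₀); simp only []; linarith
    · simp only []; linarith
    · simp only []; linarith
  have h0 : (x₀, y₀) ∈ C := hmem _ _ hx₀.le (by simp [φ])
  obtain ⟨⟨x, y⟩, hq, hmin⟩ := hCc.exists_isMinOn ⟨_, h0⟩
    (f := fun p => z p.1 p.2 - τ * (E p.1 p.2 - 1))
    (h.cont.sub (continuous_const.mul (hEc.sub continuous_const))).continuousOn
  have hxl : x ≤ l := hq.1.1.2
  have hφ0 : 0 ≤ φ x y := hq.2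
  have hE1 : 1 ≤ E x y := one_le_exp (by positivity)
  have hge : 0 ≤ z x y - τ * (E x y - 1) := by
    by_contra! hneg
    have hxlt : x < l := by
      refine lt_of_le_of_ne hxl fun he => ?_
      have hφb : φ x y ≤ b := by
        have := sq_nonneg (y - y₀)
        simp only [φ]; linarith
      have h1 : τ * (E x y - 1) ≤ η := by
        calc _ ≤ τ * exp (α * b) := by
              gcongr
              have : E x y ≤ exp (α * b) := exp_le_exp.2 (by gcongr)
              linarith
          _ = η := by rw [hτ]; field_simp
      have h2 : η ≤ z x y := by rw [he]; exact hη y hq.1.2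
      linarith
    have hφpos : 0 < φ x y := by
      refine lt_of_le_of_ne hφ0 fun he => ?_
      have : E x y = 1 := by simp only [E]; rw [← he]; simp
      rw [this] at hneg
      linarith [hz x y hxl]
    have hnx : ∀ᶠ s in nhds x, (s, y) ∈ C := by
      have h1 : ∀ᶠ s in nhds x, 0 < φ s y :=
        ContinuousAt.eventually_lt continuousAt_const
          (by simp only [φ]; fun_prop : ContinuousAt (fun s => φ s y) x) hφpos
      filter_upwards [h1, Iio_mem_nhds hxlt] with s h2 h3 using hmem s y (le_of_lt h3) h2.le
    have hny : ∀ᶠ s in nhds y, (x, s) ∈ C := by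
      have h1 : ∀ᶠ s in nhds y, 0 < φ x s :=
        ContinuousAt.eventually_lt continuousAt_const
          (by simp only [φ]; fun_prop : ContinuousAt (fun s => φ x s) y) hφpos
      filter_upwards [h1] with s h2 using hmem x s hxl h2.le
    have hX := deriv_eq_second_le_of_touching (f := fun s => τ * (E s y - 1))
      (f' := fun s => τ * (α * E s y)) (h := fun s => z s y) (h' := fun s => zx s y) (a := x)
      (d := τ * (α * (α * E x y))) (e := zxx x y)
      (fun s => ((hEx s y).sub_const 1).const_mul τ) (((hEx x y).const_mul α).const_mul τ)
      (fun s => h.dx s y) (h.dxx x y)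
      (hnx.mono fun s hsC => by
        have : z x y - τ * (E x y - 1) ≤ z s y - τ * (E s y - 1) := hmin hsC
        linarith)
    have hY := deriv_eq_second_le_of_touching (f := fun s => τ * (E x s - 1))
      (f' := fun s => τ * (α * (-(2 * (s - y₀))) * E x s)) (h := fun s => z x s)
      (h' := fun s => zy x s) (a := y)
      (d := τ * (α * (-2) * E x y + α * (-(2 * (y - y₀))) * (α * (-(2 * (y - y₀))) * E x y)))
      (e := zyy x y)
      (fun s => ((hEy x s).sub_const 1).const_mul τ) ((hEyy x y).const_mul τ)
      (fun s => h.dy x s) (h.dyy x y)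
      (hny.mono fun s hsC => by
        have : z x y - τ * (E x y - 1) ≤ z x s - τ * (E x s - 1) := hmin hsC
        linarith)
    have h1 := hs x y hxlt
    rw [← hY.1] at h1
    have h2 : K * z x y ≤ K * (τ * E x y) := by
      gcongr
      linarith
    have h3 : 0 < τ * E x y := by positivity
    have h4 : α * α + (α * (-2) + α * (-(2 * (y - y₀))) * (α * (-(2 * (y - y₀))))) +
        c * (α * (-(2 * (y - y₀)))) ≤ K := by
      refine le_of_mul_le_mul_right ?_ h3
      linarith [hX.2, hY.2]
    nlinarith [sq_nonneg (c + 2 * (α * (-(2 * (y - y₀))))), sq_nonneg c,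
      mul_nonneg (sq_nonneg c) hK, sq_nonneg (c ^ 2)]
  have hfinal : z x y - τ * (E x y - 1) ≤ z x₀ y₀ - τ * (E x₀ y₀ - 1) := hmin h0
  have hE0 : 1 < E x₀ y₀ := by
    simp only [E, φ]
    exact one_lt_exp_iff.2 (by simp [hα0])
  have := mul_pos hτ0 (sub_pos.2 hE0)
  linarith

/-- Sliding method: a solution increasing in `y` lies below its reflections in vertical lines. -/
theorem le_reflection_of_sliding {u ux uy uxx uyy : ℝ → ℝ → ℝ} {f : ℝ → ℝ} {c K κ δ l : ℝ}
    (h : HasPurePartials u ux uy uxx uyy)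
    (heq : ∀ x y, uxx x y + uyy x y + c * uy x y = f (u x y))
    (hu : ∀ x y, |u x y| ≤ 1) (hmono : ∀ x, StrictMono (u x)) (hK : 0 ≤ K)
    (hlip : ∀ a b, -1 ≤ b → b ≤ a → a ≤ 1 → |f a - f b| ≤ K * (a - b)) (hκ : 0 < κ)
    (hκf : ∀ a b, -1 ≤ b → b ≤ a → a ≤ -1 + δ → κ * (a - b) ≤ f a - f b)
    (hleft : ∃ M, ∀ x ≤ -M, ∀ y, u x y ≤ -1 + δ)
    (htop : ∀ M, ∃ Y, ∀ x ∈ Set.Icc (-M) (l - 1 / (6 * K + 3)), ∀ y, u x y ≤ u (2 * l - x) Y)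
    (hbot : ∀ M, ∃ Y, ∀ x ∈ Set.Icc (-M) (l - 1 / (6 * K + 3)), ∀ y ≤ -Y,
      u x y ≤ -1 + δ ∨ u x y ≤ u (2 * l - x) y)
    (x y : ℝ) (hx : x ≤ l) : u x y ≤ u (2 * l - x) y := by
  obtain ⟨M, hM⟩ := hleft
  obtain ⟨Y₁, hY₁⟩ := htop M
  obtain ⟨Y₀, hY₀⟩ := hbot M
  set ε := 1 / (6 * K + 3) with hε
  have hε0 : 0 < ε := by positivity
  have hub : ∀ x y, -1 ≤ u x y ∧ u x y ≤ 1 := fun x y => abs_le.1 (hu x y)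
  have claim : ∀ s, 0 ≤ s → (∀ x ∈ Set.Icc (-M) (l - ε), ∀ y ∈ Set.Icc (-Y₀) Y₁,
      u x y ≤ u (2 * l - x) (y + s)) → ∀ x y, x ≤ l → u x y ≤ u (2 * l - x) (y + s) := by
    intro s hs hC x y hx
    have := nonpos_of_narrow_strip (l := l) (c := c) (K := K) (κ := κ) (B := 2)
      (h.sub (h.reflect_shift l s)) hK hκ
      (fun x y => by linarith [hub x y, hub (2 * l - x) (y + s)])
      (fun y => by
        have h1 : u l y ≤ u l (y + s) := (hmono l).monotone (by linarith)
        have h2 : 2 * l - l = l := by ring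
        simp only [h2]
        linarith)
      (fun x y hx hpos => by
        have hL : uxx x y - uxx (2 * l - x) (y + s) + (uyy x y - uyy (2 * l - x) (y + s)) +
            c * (uy x y - uy (2 * l - x) (y + s)) = f (u x y) - f (u (2 * l - x) (y + s)) := by
          rw [← heq, ← heq]; ring
        rw [hL]
        have hle : u (2 * l - x) (y + s) ≤ u x y := by linarith
        by_cases h1 : l - ε ≤ x
        · right
          refine ⟨h1, ?_⟩
          have := hlip _ _ (hub _ _).1 hle (hub _ _).2
          linarith [(abs_le.1 this).1]
        left
        refine hκf _ _ (hub _ _).1 hle ?_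
        by_contra! h2
        have h3 : -M < x := by
          by_contra! h3
          exact h2.not_ge (hM x h3 y)
        have hxI : x ∈ Set.Icc (-M) (l - ε) := ⟨h3.le, by linarith⟩
        rcases le_total y (-Y₀) with h4 | h4
        · rcases hY₀ x hxI y h4 with h5 | h5
          · linarith
          · have : u (2 * l - x) y ≤ u (2 * l - x) (y + s) := (hmono _).monotone (by linarith)
            linarith
        rcases le_total y Y₁ with h5 | h5
        · linarith [hC x hxI y ⟨h4, h5⟩]
        · have : u (2 * l - x) Y₁ ≤ u (2 * l - x) (y + s) := (hmono _).monotone (by linarith)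
          linarith [hY₁ x hxI y])
      x y hx
    linarith
  let S : Set ℝ := {s | 0 ≤ s ∧ ∀ x y, x ≤ l → u x y ≤ u (2 * l - x) (y + s)}
  have hcont : ∀ x y, Continuous fun s => u (2 * l - x) (y + s) := fun x y =>
    h.cont.comp (f := fun s : ℝ => (2 * l - x, y + s)) (by fun_prop)
  have hSc : IsClosed S := by
    have : S = Set.Ici 0 ∩ ⋂ x, ⋂ y, ⋂ _ : x ≤ l, {s | u x y ≤ u (2 * l - x) (y + s)} := by
      ext s; simp [S]
    rw [this]
    refine isClosed_Ici.inter ?_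
    exact isClosed_iInter fun x => isClosed_iInter fun y => isClosed_iInter fun _ =>
      isClosed_le continuous_const (hcont x y)
  have hSn : S.Nonempty := by
    refine ⟨max 0 (Y₀ + Y₁), le_max_left _ _, claim _ (le_max_left _ _) fun x hx y hy => ?_⟩
    refine (hY₁ x hx y).trans ((hmono _).monotone ?_)
    linarith [le_max_right 0 (Y₀ + Y₁), hy.1]
  have hSb : BddBelow S := ⟨0, fun s hs => hs.1⟩
  obtain ⟨hs0, hs⟩ := hSc.csInf_mem hSn hSb
  set s := sInf S
  rcases hs0.eq_or_lt with h0 | hspos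
  · rw [← h0] at hs
    simpa using hs x y hx
  exfalso
  have hz := pos_of_pos_on_boundary_line (l := l) (c := c) (K := K)
    ((h.reflect_shift l s).sub h) hK (fun x y hx => by linarith [hs x y hx])
    (fun y => by
      have h1 : u l y < u l (y + s) := hmono l (by linarith)
      have h2 : 2 * l - l = l := by ring
      simp only [h2]
      linarith)
    (fun x y hx => by
      have hL : uxx (2 * l - x) (y + s) - uxx x y + (uyy (2 * l - x) (y + s) - uyy x y) +
          c * (uy (2 * l - x) (y + s) - uy x y) = f (u (2 * l - x) (y + s)) - f (u x y) := by
        rw [← heq, ← heq]; ring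
      rw [hL]
      exact (le_abs_self _).trans (hlip _ _ (hub _ _).1 (hs x y hx.le) (hub _ _).2))
  have hev : ∀ᶠ t in nhds s, ∀ p ∈ Set.Icc (-M) (l - ε) ×ˢ Set.Icc (-Y₀) Y₁,
      u p.1 p.2 < u (2 * l - p.1) (p.2 + t) := by
    refine IsCompact.eventually_forall_of_forall_eventually (isCompact_Icc.prod isCompact_Icc) ?_
    rintro ⟨x, y⟩ hp
    refine ContinuousAt.eventually_lt (f := fun z : ℝ × ℝ × ℝ => u z.2.1 z.2.2)
      (g := fun z : ℝ × ℝ × ℝ => u (2 * l - z.2.1) (z.2.2 + z.1))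
      (h.cont.comp continuous_snd).continuousAt
      (h.cont.comp (f := fun z : ℝ × ℝ × ℝ => (2 * l - z.2.1, z.2.2 + z.1))
        (by fun_prop)).continuousAt ?_
    have := hz x y (by linarith [hp.1.2])
    simp only
    linarith
  obtain ⟨a, ha, hal⟩ := exists_Ioc_subset_of_mem_nhds hev ⟨0, hspos⟩
  obtain ⟨t, ht1, ht2⟩ := exists_between (max_lt ha hspos)
  have hat := hal ⟨(le_max_left _ _).trans_lt ht1, ht2.le⟩
  have ht0 : 0 ≤ t := ((le_max_right _ _).trans_lt ht1).le
  have : t ∈ S := ⟨ht0, claim t ht0 fun x hx y hy => (hat (x, y) ⟨hx, hy⟩).le⟩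
  exact (csInf_le hSb this).not_gt ht2

namespace BalancedDoubleWell

variable {F : ℝ → ℝ}

theorem hasDerivAt (hF : BalancedDoubleWell F) (s : ℝ) : HasDerivAt F (deriv F s) s :=
  (hF.1.differentiable (by norm_num) s).hasDerivAt

theorem contDiff_deriv (hF : BalancedDoubleWell F) : ContDiff ℝ 2 (deriv F) :=
  (contDiff_succ_iff_deriv (n := 2)).1 hF.1 |>.2.2

theorem exists_lipschitz (hF : BalancedDoubleWell F) :
    ∃ K, 0 ≤ K ∧ ∀ a b, -1 ≤ b → b ≤ a → a ≤ 1 → |deriv F a - deriv F b| ≤ K * (a - b) := by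
  have hd := hF.contDiff_deriv
  obtain ⟨K, hK⟩ := isCompact_Icc.exists_bound_of_continuousOn (s := Set.Icc (-1 : ℝ) 1)
    (hd.continuous_deriv (by norm_num)).continuousOn
  refine ⟨K, (norm_nonneg _).trans (hK 0 (by simp)), fun a b hb hba ha => ?_⟩
  have := (convex_Icc (-1 : ℝ) 1).norm_image_sub_le_of_norm_deriv_le
    (fun x _ => hd.differentiable (by norm_num) x) hK
    (x := b) (y := a) ⟨hb, hba.trans ha⟩ ⟨hb.trans hba, ha⟩
  rwa [Real.norm_eq_abs, Real.norm_eq_abs, abs_of_nonneg (sub_nonneg.2 hba)] at this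

theorem pos (hF : BalancedDoubleWell F) {s : ℝ} (h1 : -1 < s) (h2 : s < 1) : 0 < F s := by
  obtain ⟨hc, -, -, -, -, hp, hn, hm1, hp1⟩ := hF
  rcases le_total s 0 with h | h
  · have := strictMonoOn_of_deriv_pos (convex_Icc (-1 : ℝ) 0) hc.continuous.continuousOn
      (by rwa [interior_Icc]) ⟨le_rfl, by norm_num⟩ ⟨h1.le, h⟩ h1
    rwa [hm1] at this
  · have := strictAntiOn_of_deriv_neg (convex_Icc (0 : ℝ) 1) hc.continuous.continuousOn
      (by rwa [interior_Icc]) ⟨h, h2.le⟩ ⟨by norm_num, le_rfl⟩ h2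
    rwa [hp1] at this

theorem nonneg (hF : BalancedDoubleWell F) {s : ℝ} (h : |s| ≤ 1) : 0 ≤ F s := by
  obtain ⟨h1, h2⟩ := abs_le.1 h
  rcases h1.eq_or_lt with rfl | h1
  · exact hF.2.2.2.2.2.2.2.1.ge
  rcases h2.eq_or_lt with rfl | h2
  · exact hF.2.2.2.2.2.2.2.2.ge
  exact (hF.pos h1 h2).le

theorem le_sq (hF : BalancedDoubleWell F) {K : ℝ} (hK0 : 0 ≤ K)
    (hK : ∀ a b, -1 ≤ b → b ≤ a → a ≤ 1 → |deriv F a - deriv F b| ≤ K * (a - b))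
    {s : ℝ} (hs : |s| ≤ 1) : F s ≤ K * (1 - s) ^ 2 ∧ F s ≤ K * (1 + s) ^ 2 := by
  obtain ⟨h1, h2⟩ := abs_le.1 hs
  have hd1 := hF.2.2.1
  have hd2 := hF.2.1
  constructor
  · have := (convex_Icc s 1).norm_image_sub_le_of_norm_deriv_le (f := F) (C := K * (1 - s))
      (fun x _ => hF.1.differentiable (by norm_num) x)
      (fun x hx => by
        have := hK 1 x (h1.trans hx.1) hx.2 le_rfl
        rw [hd1, zero_sub, abs_neg] at this
        rw [Real.norm_eq_abs]
        exact this.trans (by gcongr; exact hx.1))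
      (x := 1) (y := s) ⟨h2, le_rfl⟩ ⟨le_rfl, h2⟩
    rw [hF.2.2.2.2.2.2.2.2, Real.norm_eq_abs, Real.norm_eq_abs, abs_sub_comm s,
      abs_of_nonneg (sub_nonneg.2 h2), sub_zero] at this
    linarith [le_abs_self (F s)]
  · have := (convex_Icc (-1) s).norm_image_sub_le_of_norm_deriv_le (f := F) (C := K * (1 + s))
      (fun x _ => hF.1.differentiable (by norm_num) x)
      (fun x hx => by
        have := hK x (-1) le_rfl hx.1 (hx.2.trans h2)
        rw [hd2, sub_zero] at this
        rw [Real.norm_eq_abs]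
        exact this.trans (by gcongr; linarith [hx.2]))
      (x := -1) (y := s) ⟨le_rfl, h1⟩ ⟨h1, le_rfl⟩
    rw [hF.2.2.2.2.2.2.2.1, Real.norm_eq_abs, Real.norm_eq_abs, sub_neg_eq_add,
      abs_of_nonneg (by linarith : 0 ≤ s + 1), sub_zero] at this
    linarith [le_abs_self (F s)]

end BalancedDoubleWell

/-- Near a point where the derivative is positive, difference quotients are bounded below. -/
theorem exists_slope_lower_bound {f : ℝ → ℝ} (hf : ContDiff ℝ 1 f) {p : ℝ} (hp : 0 < deriv f p) :
    ∃ δ > 0, ∃ κ > 0, ∀ a b, p - δ ≤ b → b ≤ a → a ≤ p + δ → κ * (a - b) ≤ f a - f b := by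
  have hev : ∀ᶠ s in nhds p, deriv f p / 2 < deriv f s :=
    (hf.continuous_deriv le_rfl).continuousAt.eventually_const_lt (by linarith)
  obtain ⟨δ, hδ, hball⟩ := Metric.eventually_nhds_iff.1 hev
  refine ⟨δ, hδ, deriv f p / 2, by positivity, fun a b hb hba ha => ?_⟩
  refine (convex_Icc (p - δ) (p + δ)).mul_sub_le_image_sub_of_le_deriv hf.continuous.continuousOn
    (hf.differentiable one_ne_zero).differentiableOn (fun x hx => ?_) b ⟨hb, hba.trans ha⟩ a
    ⟨hb.trans hba, ha⟩ hba
  rw [interior_Icc] at hx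
  refine (hball ?_).le
  rw [Real.dist_eq, abs_lt]
  constructor <;> linarith [hx.1, hx.2]

/-- A nonnegative function with `|v'| ≤ k v` vanishing somewhere vanishes identically. -/
theorem eq_zero_of_abs_deriv_le {v v' : ℝ → ℝ} {k s₀ : ℝ} (hv : ∀ s, HasDerivAt v (v' s) s)
    (h0 : ∀ s, 0 ≤ v s) (hk : ∀ s, |v' s| ≤ k * v s) (hs₀ : v s₀ = 0) (s : ℝ) : v s = 0 := by
  have hd : ∀ a s, HasDerivAt (fun s => v s * exp (a * s)) ((v' s + a * v s) * exp (a * s)) s :=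
    fun a s => ((hv s).mul (((hasDerivAt_id s).const_mul a).exp)).congr_deriv
      (by simp only [id]; ring)
  refine le_antisymm ?_ (h0 s)
  rcases le_total s s₀ with h | h
  · have hm : Monotone fun s => v s * exp (k * s) :=
      monotone_of_deriv_nonneg (fun s => (hd k s).differentiableAt) fun s => by
        rw [(hd k s).deriv]
        have := (abs_le.1 (hk s)).1
        exact mul_nonneg (by linarith) (exp_pos _).le
    have := hm h
    simp only [hs₀, zero_mul] at this
    exact nonpos_of_mul_nonpos_left this (exp_pos _)
  · have hm : Antitone fun s => v s * exp (-k * s) :=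
      antitone_of_deriv_nonpos (fun s => (hd (-k) s).differentiableAt) fun s => by
        rw [(hd (-k) s).deriv]
        have := (abs_le.1 (hk s)).2
        exact mul_nonpos_of_nonpos_of_nonneg (by linarith) (exp_pos _).le
    have := hm h
    simp only [hs₀, zero_mul] at this
    exact nonpos_of_mul_nonpos_left this (exp_pos _)

/-- A standing wave with values in `[-1, 1]` is strictly increasing. -/
theorem strictMono_of_standing_wave {F g : ℝ → ℝ} (hF : BalancedDoubleWell F)
    (hg : ContDiff ℝ 3 g) (hgeq : ∀ s, deriv (deriv g) s = deriv F (g s))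
    (hgtop : Tendsto g atTop (nhds 1)) (hg0 : g 0 = 0) (hgb : ∀ s, |g s| ≤ 1) :
    StrictMono g := by
  have hd : ∀ s, HasDerivAt g (deriv g s) s := fun s =>
    (hg.differentiable (by norm_num) s).hasDerivAt
  have hdd : ∀ s, HasDerivAt (deriv g) (deriv F (g s)) s := fun s => by
    have h2 : ContDiff ℝ 2 (deriv g) := (contDiff_succ_iff_deriv (n := 2)).1 hg |>.2.2
    rw [← hgeq]
    exact (h2.differentiable (by norm_num) s).hasDerivAt
  have hEd : ∀ s, HasDerivAt (fun s => deriv g s ^ 2 - 2 * F (g s)) 0 s := fun s =>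
    (((hdd s).pow 2).sub (((hF.hasDerivAt (g s)).comp s (hd s)).const_mul 2)).congr_deriv
      (by simp; ring)
  have hconst : ∀ s t, deriv g s ^ 2 - 2 * F (g s) = deriv g t ^ 2 - 2 * F (g t) :=
    is_const_of_deriv_eq_zero (fun s => (hEd s).differentiableAt) fun s => (hEd s).deriv
  have hE : ∀ s, deriv g s ^ 2 = 2 * F (g s) := fun s => by
    have hξ : ∀ n : ℕ, ∃ ξ ∈ Set.Ioo (n : ℝ) (n + 1), deriv g ξ = g (n + 1) - g n := fun n => by
      obtain ⟨ξ, h1, h2⟩ := exists_deriv_eq_slope g (lt_add_one (n : ℝ))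
        hg.continuous.continuousOn fun x _ => (hd x).differentiableAt.differentiableWithinAt
      exact ⟨ξ, h1, by rw [h2]; simp⟩
    choose ξ hξ1 hξ2 using hξ
    have hξt : Tendsto ξ atTop atTop :=
      tendsto_atTop_mono (fun n => (hξ1 n).1.le) tendsto_natCast_atTop_atTop
    have hcast : Tendsto (fun n : ℕ => (n : ℝ)) atTop atTop := tendsto_natCast_atTop_atTop
    have h1 : Tendsto (fun n : ℕ => deriv g (ξ n)) atTop (nhds (1 - 1)) := by
      simp only [hξ2]
      exact (hgtop.comp (tendsto_atTop_add_const_right _ 1 hcast)).sub (hgtop.comp hcast)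
    have h2 : Tendsto (fun n => F (g (ξ n))) atTop (nhds (F 1)) :=
      (hF.1.continuous.tendsto 1).comp (hgtop.comp hξt)
    have h3 := (h1.pow 2).sub (h2.const_mul 2)
    simp only [hconst _ s, hF.2.2.2.2.2.2.2.2] at h3
    have := tendsto_nhds_unique tendsto_const_nhds h3
    linarith
  obtain ⟨K, hK0, hK⟩ := hF.exists_lipschitz
  have hlt : ∀ s, -1 < g s ∧ g s < 1 := by
    have hkey : ∀ σ : ℝ, |σ| = 1 → (∀ t, |t| ≤ 1 → 0 ≤ 1 - σ * t) →
        (∀ t, |t| ≤ 1 → F t ≤ K * (1 - σ * t) ^ 2) → ∀ s, 1 - σ * g s ≠ 0 := by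
      intro σ hσ h1 h2 s hs
      have := eq_zero_of_abs_deriv_le (v := fun s => 1 - σ * g s) (k := √(2 * K))
        (fun s => ((hd s).const_mul σ).const_sub 1) (fun s => h1 _ (hgb s))
        (fun s => by
          rw [abs_neg, abs_mul, hσ, one_mul]
          refine abs_le_of_sq_le_sq ?_ (mul_nonneg (sqrt_nonneg _) (h1 _ (hgb s)))
          rw [hE, mul_pow, sq_sqrt (by positivity)]
          linarith [h2 _ (hgb s)]) hs 0
      simp [hg0] at this
    intro s
    obtain ⟨h1, h2⟩ := abs_le.1 (hgb s)
    refine ⟨lt_of_le_of_ne h1 fun h => ?_, lt_of_le_of_ne h2 fun h => ?_⟩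
    · refine hkey (-1) (by simp) (fun t ht => by linarith [(abs_le.1 ht).1])
        (fun t ht => (hF.le_sq hK0 hK ht).2.trans_eq (by ring)) s (by rw [← h]; norm_num)
    · refine hkey 1 (by simp) (fun t ht => by linarith [(abs_le.1 ht).2])
        (fun t ht => (hF.le_sq hK0 hK ht).1.trans_eq (by ring)) s (by rw [h]; norm_num)
  have hne : ∀ s ∈ Set.univ, deriv g s ≠ 0 := fun s _ h => by
    have h1 := hE s
    have h2 := hF.pos (hlt s).1 (hlt s).2
    rw [h] at h1
    linarith
  rcases hasDerivWithinAt_forall_lt_or_forall_gt_of_forall_ne convex_univ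
    (fun s _ => (hd s).hasDerivWithinAt) hne with h | h
  · have hanti : StrictAnti g := strictAnti_of_deriv_neg fun s => h s trivial
    have := hanti.antitone.le_of_tendsto hgtop 0
    rw [hg0] at this
    linarith
  · exact strictMono_of_deriv_pos fun s => h s trivial

section PlaneCalculus

variable {u P Q : ℝ → ℝ → ℝ}

theorem hasDerivAt_fst_of_differentiable (hu : Differentiable ℝ fun p : ℝ × ℝ => u p.1 p.2)
    (x y : ℝ) :
    HasDerivAt (fun t => u t y) (fderiv ℝ (fun p : ℝ × ℝ => u p.1 p.2) (x, y) (1, 0)) x :=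
  HasFDerivAt.comp_hasDerivAt (f := fun t : ℝ => (t, y)) (l := fun p : ℝ × ℝ => u p.1 p.2) x
    (hu (x, y)).hasFDerivAt ((hasDerivAt_id x).prodMk (hasDerivAt_const x y))

theorem hasDerivAt_snd_of_differentiable (hu : Differentiable ℝ fun p : ℝ × ℝ => u p.1 p.2)
    (x y : ℝ) :
    HasDerivAt (fun t => u x t) (fderiv ℝ (fun p : ℝ × ℝ => u p.1 p.2) (x, y) (0, 1)) y :=
  HasFDerivAt.comp_hasDerivAt (f := fun t : ℝ => (x, t)) (l := fun p : ℝ × ℝ => u p.1 p.2) y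
    (hu (x, y)).hasFDerivAt ((hasDerivAt_const y x).prodMk (hasDerivAt_id y))

theorem pdx_eq_fderiv (hu : Differentiable ℝ fun p : ℝ × ℝ => u p.1 p.2) (x y : ℝ) :
    pdx u x y = fderiv ℝ (fun p : ℝ × ℝ => u p.1 p.2) (x, y) (1, 0) :=
  (hasDerivAt_fst_of_differentiable hu x y).deriv

theorem pdy_eq_fderiv (hu : Differentiable ℝ fun p : ℝ × ℝ => u p.1 p.2) (x y : ℝ) :
    pdy u x y = fderiv ℝ (fun p : ℝ × ℝ => u p.1 p.2) (x, y) (0, 1) :=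
  (hasDerivAt_snd_of_differentiable hu x y).deriv

theorem hasDerivAt_pdx (hu : Differentiable ℝ fun p : ℝ × ℝ => u p.1 p.2) (x y : ℝ) :
    HasDerivAt (fun t => u t y) (pdx u x y) x :=
  (hasDerivAt_fst_of_differentiable hu x y).differentiableAt.hasDerivAt

theorem hasDerivAt_pdy (hu : Differentiable ℝ fun p : ℝ × ℝ => u p.1 p.2) (x y : ℝ) :
    HasDerivAt (fun t => u x t) (pdy u x y) y :=
  (hasDerivAt_snd_of_differentiable hu x y).differentiableAt.hasDerivAt

theorem contDiff_pdx {m n : WithTop ℕ∞} (hu : ContDiff ℝ n fun p : ℝ × ℝ => u p.1 p.2)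
    (hmn : m + 1 ≤ n) : ContDiff ℝ m fun p : ℝ × ℝ => pdx u p.1 p.2 := by
  have hd : Differentiable ℝ fun p : ℝ × ℝ => u p.1 p.2 :=
    (hu.of_le ((self_le_add_left 1 m).trans hmn)).differentiable one_ne_zero
  simp only [pdx_eq_fderiv hd]
  exact (hu.fderiv_right hmn).clm_apply contDiff_const

theorem contDiff_pdy {m n : WithTop ℕ∞} (hu : ContDiff ℝ n fun p : ℝ × ℝ => u p.1 p.2)
    (hmn : m + 1 ≤ n) : ContDiff ℝ m fun p : ℝ × ℝ => pdy u p.1 p.2 := by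
  have hd : Differentiable ℝ fun p : ℝ × ℝ => u p.1 p.2 :=
    (hu.of_le ((self_le_add_left 1 m).trans hmn)).differentiable one_ne_zero
  simp only [pdy_eq_fderiv hd]
  exact (hu.fderiv_right hmn).clm_apply contDiff_const

theorem pdy_pdx_eq_pdx_pdy (hu : ContDiff ℝ 2 fun p : ℝ × ℝ => u p.1 p.2) (x y : ℝ) :
    pdy (pdx u) x y = pdx (pdy u) x y := by
  have hd : Differentiable ℝ fun p : ℝ × ℝ => u p.1 p.2 := hu.differentiable (by norm_num)
  have hd2 : Differentiable ℝ (fderiv ℝ fun p : ℝ × ℝ => u p.1 p.2) :=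
    (hu.fderiv_right (m := 1) (by norm_num)).differentiable one_ne_zero
  rw [pdy_eq_fderiv ((contDiff_pdx (m := 1) hu (by norm_num)).differentiable one_ne_zero),
    pdx_eq_fderiv ((contDiff_pdy (m := 1) hu (by norm_num)).differentiable one_ne_zero)]
  simp only [pdx_eq_fderiv hd, pdy_eq_fderiv hd]
  have hsymm : IsSymmSndFDerivAt ℝ (fun p : ℝ × ℝ => u p.1 p.2) (x, y) :=
    hu.contDiffAt.isSymmSndFDerivAt (by simp)
  have key : ∀ v w : ℝ × ℝ, fderiv ℝ (fun p => fderiv ℝ (fun p : ℝ × ℝ => u p.1 p.2) p v) (x, y) w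
      = fderiv ℝ (fderiv ℝ fun p : ℝ × ℝ => u p.1 p.2) (x, y) w v := fun v w => by
    rw [fderiv_clm_apply (hd2 _) (differentiableAt_const v)]
    simp
  exact (key _ _).trans ((hsymm _ _).trans (key _ _).symm)

/-- The divergence theorem on a rectangle. -/
theorem integral_pdx_add_pdy (hP : ContDiff ℝ 1 fun p : ℝ × ℝ => P p.1 p.2)
    (hQ : ContDiff ℝ 1 fun p : ℝ × ℝ => Q p.1 p.2) (x₁ x₂ y₁ y₂ : ℝ) :
    ∫ x in x₁..x₂, ∫ y in y₁..y₂, (pdx P x y + pdy Q x y) =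
      (((∫ x in x₁..x₂, Q x y₂) - ∫ x in x₁..x₂, Q x y₁) + ∫ y in y₁..y₂, P x₂ y) -
        ∫ y in y₁..y₂, P x₁ y := by
  have hPd := hP.differentiable one_ne_zero
  have hQd := hQ.differentiable one_ne_zero
  have := integral2_divergence_prod_of_hasFDerivAt _ _ _ _ x₁ y₁ x₂ y₂
    hP.continuous.continuousOn hQ.continuous.continuousOn
    (fun p _ => (hPd p).hasFDerivAt) (fun p _ => (hQd p).hasFDerivAt)
    (ContinuousOn.integrableOn_compact (isCompact_uIcc.prod isCompact_uIcc)
      (Continuous.continuousOn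
        (((hP.continuous_fderiv one_ne_zero).clm_apply continuous_const).add
        ((hQ.continuous_fderiv one_ne_zero).clm_apply continuous_const))))
  simpa only [pdx_eq_fderiv hPd, pdy_eq_fderiv hQd] using this

/-- A bounded function has a vertical slice along which the integral of its `x`-derivative is
small. -/
theorem exists_slice_integral_pdx_le (hu : ContDiff ℝ 2 fun p : ℝ × ℝ => u p.1 p.2)
    (hb : ∀ x y, |u x y| ≤ 1) (a : ℝ) {N y₁ y₂ : ℝ} (hN : 0 < N) (hy : y₁ < y₂) :
    ∃ x ∈ Set.Icc (a - N) a, ∫ y in y₁..y₂, pdx u x y ≤ 3 * (y₂ - y₁) / N := by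
  have h1 : ContDiff ℝ 1 fun p : ℝ × ℝ => u p.1 p.2 := hu.of_le (by norm_num)
  have hc : Continuous fun p : ℝ × ℝ => pdx u p.1 p.2 :=
    (contDiff_pdx (m := 1) hu (by norm_num)).continuous
  have h2 := integral_pdx_add_pdy (P := u) (Q := fun _ _ => 0) h1 contDiff_const (a - N) a y₁ y₂
  have h0 : ∀ x y, pdy (fun _ _ => 0) x y = 0 := fun x y => by simp [pdy]
  simp only [h0, add_zero, intervalIntegral.integral_zero, sub_zero, zero_add] at h2
  have hcu : ∀ x, Continuous fun y => u x y := fun x =>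
    h1.continuous.comp (f := fun y : ℝ => (x, y)) (by fun_prop)
  rw [← intervalIntegral.integral_sub ((hcu _).intervalIntegrable _ _)
    ((hcu _).intervalIntegrable _ _)] at h2
  have h3 : ∫ y in y₁..y₂, (u a y - u (a - N) y) ≤ ∫ y in y₁..y₂, (2 : ℝ) :=
    intervalIntegral.integral_mono_on hy.le (((hcu _).sub (hcu _)).intervalIntegrable _ _)
      (by simp) fun y _ => by linarith [abs_le.1 (hb a y), abs_le.1 (hb (a - N) y)]
  rw [intervalIntegral.integral_const, smul_eq_mul] at h3
  by_contra! hcon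
  have hci : Continuous fun x => ∫ y in y₁..y₂, pdx u x y :=
    intervalIntegral.continuous_parametric_intervalIntegral_of_continuous' hc _ _
  have h4 : ∫ x in (a - N)..a, 3 * (y₂ - y₁) / N ≤ ∫ x in (a - N)..a, ∫ y in y₁..y₂, pdx u x y :=
    intervalIntegral.integral_mono_on (by linarith) (by simp) (hci.intervalIntegrable _ _)
      fun x hx => (hcon x hx).le
  rw [intervalIntegral.integral_const, smul_eq_mul, sub_sub_cancel, mul_div_cancel₀ _ hN.ne'] at h4
  linarith

end PlaneCalculus

namespace IsSolution

variable {F : ℝ → ℝ} {c : ℝ} {u : ℝ → ℝ → ℝ}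

theorem hasPurePartials (hu : IsSolution F c u) :
    HasPurePartials u (pdx u) (pdy u) (pdxx u) (pdyy u) where
  cont := hu.1.continuous
  dx := hasDerivAt_pdx (hu.1.differentiable (by norm_num))
  dy := hasDerivAt_pdy (hu.1.differentiable (by norm_num))
  dxx := hasDerivAt_pdx ((contDiff_pdx (m := 2) hu.1 (by norm_num)).differentiable (by norm_num))
  dyy := hasDerivAt_pdy ((contDiff_pdy (m := 2) hu.1 (by norm_num)).differentiable (by norm_num))

theorem strictMono (hu : IsSolution F c u) (x : ℝ) : StrictMono (u x) :=
  strictMono_of_deriv_pos fun y => hu.2.2.2 x y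

theorem exists_partials_le (hu : IsSolution F c u) (hF : BalancedDoubleWell F) :
    ∃ A, 0 < A ∧ (∀ x y, pdx u x y ≤ A) ∧ ∀ x y, pdy u x y ≤ A := by
  obtain ⟨K, hK0, hK⟩ := hF.exists_lipschitz
  have hb : ∀ x y, |deriv F (u x y)| ≤ 2 * K := fun x y => by
    obtain ⟨h1, h2⟩ := abs_le.1 (hu.2.2.1 x y)
    have := hK (u x y) (-1) le_rfl h1 h2
    rw [hF.2.1, sub_zero] at this
    refine this.trans ?_
    nlinarith
  refine ⟨2 * K + 2, by positivity, fun x y => ?_, fun x y => ?_⟩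
  · refine partial_x_le_of_bounded (a := 0) (b := c) hu.hasPurePartials hu.2.2.1 (fun x y => ?_) x y
    have := hu.2.1 x y
    rw [zero_mul, add_zero, this]
    exact hb x y
  · refine partial_x_le_of_bounded (a := c) (b := 0) hu.hasPurePartials.swap
      (fun x y => hu.2.2.1 y x) (fun x y => ?_) y x
    have := hu.2.1 y x
    rw [zero_mul, add_zero, add_comm (pdyy u y x), this]
    exact hb y x

theorem contDiff_pdx (hu : IsSolution F c u) : ContDiff ℝ 2 fun p : ℝ × ℝ => pdx u p.1 p.2 :=
  _root_.contDiff_pdx hu.1 (by norm_num)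

theorem contDiff_pdy (hu : IsSolution F c u) : ContDiff ℝ 2 fun p : ℝ × ℝ => pdy u p.1 p.2 :=
  _root_.contDiff_pdy hu.1 (by norm_num)

theorem hasDerivAt_pdy_fst (hu : IsSolution F c u) (x y : ℝ) :
    HasDerivAt (fun t => pdy u t y) (pdx (pdy u) x y) x :=
  hasDerivAt_pdx (hu.contDiff_pdy.differentiable (by norm_num)) x y

theorem hasDerivAt_pdx_snd (hu : IsSolution F c u) (x y : ℝ) :
    HasDerivAt (fun t => pdx u x t) (pdx (pdy u) x y) y := by
  rw [← pdy_pdx_eq_pdx_pdy (hu.1.of_le (by norm_num))]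
  exact hasDerivAt_pdy (hu.contDiff_pdx.differentiable (by norm_num)) x y

theorem continuous_fst (hu : IsSolution F c u) (y : ℝ) : Continuous fun x => u x y :=
  hu.1.continuous.comp (f := fun x : ℝ => (x, y)) (by fun_prop)

theorem continuous_snd (hu : IsSolution F c u) (x : ℝ) : Continuous fun y => u x y :=
  hu.1.continuous.comp (f := fun y : ℝ => (x, y)) (by fun_prop)

theorem continuous_pdx_fst (hu : IsSolution F c u) (y : ℝ) : Continuous fun x => pdx u x y :=
  hu.contDiff_pdx.continuous.comp (f := fun x : ℝ => (x, y)) (by fun_prop)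

theorem continuous_pdx_snd (hu : IsSolution F c u) (x : ℝ) : Continuous fun y => pdx u x y :=
  hu.contDiff_pdx.continuous.comp (f := fun y : ℝ => (x, y)) (by fun_prop)

theorem continuous_pdy_fst (hu : IsSolution F c u) (y : ℝ) : Continuous fun x => pdy u x y :=
  hu.contDiff_pdy.continuous.comp (f := fun x : ℝ => (x, y)) (by fun_prop)

theorem continuous_pdy_snd (hu : IsSolution F c u) (x : ℝ) : Continuous fun y => pdy u x y :=
  hu.contDiff_pdy.continuous.comp (f := fun y : ℝ => (x, y)) (by fun_prop)

theorem integral_pdx (hu : IsSolution F c u) (y x₁ x₂ : ℝ) :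
    ∫ x in x₁..x₂, pdx u x y = u x₂ y - u x₁ y :=
  intervalIntegral.integral_eq_sub_of_hasDerivAt (fun x _ => hu.hasPurePartials.dx x y)
    ((hu.continuous_pdx_fst y).intervalIntegrable _ _)

theorem integral_pdy (hu : IsSolution F c u) (x y₁ y₂ : ℝ) :
    ∫ y in y₁..y₂, pdy u x y = u x y₂ - u x y₁ :=
  intervalIntegral.integral_eq_sub_of_hasDerivAt (fun y _ => hu.hasPurePartials.dy x y)
    ((hu.continuous_pdy_snd x).intervalIntegrable _ _)

theorem sub_le_two (hu : IsSolution F c u) (x y s t : ℝ) : u x y - u s t ≤ 2 := by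
  linarith [abs_le.1 (hu.2.2.1 x y), abs_le.1 (hu.2.2.1 s t)]

theorem potential_le (hu : IsSolution F c u) (hF : BalancedDoubleWell F) {K : ℝ} (hK0 : 0 ≤ K)
    (hK : ∀ a b, -1 ≤ b → b ≤ a → a ≤ 1 → |deriv F a - deriv F b| ≤ K * (a - b)) (x y : ℝ) :
    F (u x y) ≤ 2 * K * (1 - u x y) := by
  refine (hF.le_sq hK0 hK (hu.2.2.1 x y)).1.trans ?_
  obtain ⟨h1, h2⟩ := abs_le.1 (hu.2.2.1 x y)
  have : (1 - u x y) ^ 2 ≤ 2 * (1 - u x y) := by nlinarith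
  nlinarith

theorem monotone_fst (hu : IsSolution F c u) (hx : ∀ x y, 0 ≤ pdx u x y) (y : ℝ) :
    Monotone fun x => u x y :=
  monotone_of_deriv_nonneg (fun x => (hu.hasPurePartials.dx x y).differentiableAt) fun x => hx x y

/-- The horizontal momentum balance on a rectangle. -/
theorem momentum_balance (hu : IsSolution F c u) (hF : BalancedDoubleWell F) (x₁ x₂ y₁ y₂ : ℝ) :
    ∫ x in x₁..x₂, exp (c * y₂) * (pdx u x y₂ * pdy u x y₂) =
      (∫ x in x₁..x₂, exp (c * y₁) * (pdx u x y₁ * pdy u x y₁)) +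
      (∫ y in y₁..y₂, exp (c * y) * (pdx u x₁ y ^ 2 / 2 - pdy u x₁ y ^ 2 / 2 - F (u x₁ y))) -
      ∫ y in y₁..y₂, exp (c * y) * (pdx u x₂ y ^ 2 / 2 - pdy u x₂ y ^ 2 / 2 - F (u x₂ y)) := by
  have hp1 := hu.contDiff_pdx.of_le (m := 1) (by norm_num)
  have hp2 := hu.contDiff_pdy.of_le (m := 1) (by norm_num)
  have hF1 : ContDiff ℝ 1 fun p : ℝ × ℝ => F (u p.1 p.2) :=
    (hF.1.of_le (by norm_num)).comp (hu.1.of_le (by norm_num))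
  have hexp : ContDiff ℝ 1 fun p : ℝ × ℝ => exp (c * p.2) := by fun_prop
  have h := integral_pdx_add_pdy
    (P := fun x y => exp (c * y) * (pdx u x y ^ 2 / 2 - pdy u x y ^ 2 / 2 - F (u x y)))
    (Q := fun x y => exp (c * y) * (pdx u x y * pdy u x y))
    (hexp.mul ((((hp1.pow 2).div_const 2).sub ((hp2.pow 2).div_const 2)).sub hF1))
    (hexp.mul (hp1.mul hp2)) x₁ x₂ y₁ y₂
  have hzero : ∀ x y,
      pdx (fun x y => exp (c * y) * (pdx u x y ^ 2 / 2 - pdy u x y ^ 2 / 2 - F (u x y))) x y +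
      pdy (fun x y => exp (c * y) * (pdx u x y * pdy u x y)) x y = 0 := fun x y => by
    have e1 := ((((((hu.hasPurePartials.dxx x y).pow 2).div_const 2).sub
      (((hu.hasDerivAt_pdy_fst x y).pow 2).div_const 2)).sub
      ((hF.hasDerivAt (u x y)).comp x (hu.hasPurePartials.dx x y))).const_mul (exp (c * y))).deriv
    have e2 := ((((hasDerivAt_id y).const_mul c).exp).mul
      ((hu.hasDerivAt_pdx_snd x y).mul (hu.hasPurePartials.dyy x y))).deriv
    refine (congrArg₂ (· + ·) e1 e2).trans ?_
    simp only [← hu.2.1 x y]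
    simp
    ring
  simp only [hzero, intervalIntegral.integral_zero] at h
  linarith

/-- The vertical energy balance on a rectangle. -/
theorem energy_balance (hu : IsSolution F c u) (hF : BalancedDoubleWell F) (x₁ x₂ y₁ y₂ : ℝ) :
    c * ∫ x in x₁..x₂, ∫ y in y₁..y₂, pdy u x y ^ 2 =
      (∫ x in x₁..x₂, (pdx u x y₂ ^ 2 / 2 - pdy u x y₂ ^ 2 / 2 + F (u x y₂))) -
      (∫ x in x₁..x₂, (pdx u x y₁ ^ 2 / 2 - pdy u x y₁ ^ 2 / 2 + F (u x y₁))) +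
      (∫ y in y₁..y₂, pdx u x₁ y * pdy u x₁ y) - ∫ y in y₁..y₂, pdx u x₂ y * pdy u x₂ y := by
  have hp1 := hu.contDiff_pdx.of_le (m := 1) (by norm_num)
  have hp2 := hu.contDiff_pdy.of_le (m := 1) (by norm_num)
  have hF1 : ContDiff ℝ 1 fun p : ℝ × ℝ => F (u p.1 p.2) :=
    (hF.1.of_le (by norm_num)).comp (hu.1.of_le (by norm_num))
  have h := integral_pdx_add_pdy
    (P := fun x y => -(pdx u x y * pdy u x y))
    (Q := fun x y => pdx u x y ^ 2 / 2 - pdy u x y ^ 2 / 2 + F (u x y))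
    (hp1.mul hp2).neg
    ((((hp1.pow 2).div_const 2).sub ((hp2.pow 2).div_const 2)).add hF1) x₁ x₂ y₁ y₂
  have heq : ∀ x y, pdx (fun x y => -(pdx u x y * pdy u x y)) x y +
      pdy (fun x y => pdx u x y ^ 2 / 2 - pdy u x y ^ 2 / 2 + F (u x y)) x y =
      c * pdy u x y ^ 2 := fun x y => by
    have e1 := ((((((hu.hasDerivAt_pdx_snd x y).pow 2).div_const 2).sub
      (((hu.hasPurePartials.dyy x y).pow 2).div_const 2)).add
      ((hF.hasDerivAt (u x y)).comp y (hu.hasPurePartials.dy x y)))).deriv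
    have e2 := (((hu.hasPurePartials.dxx x y).mul (hu.hasDerivAt_pdy_fst x y)).fun_neg).deriv
    refine (congrArg₂ (· + ·) e2 e1).trans ?_
    simp only [← hu.2.1 x y]
    simp
    ring
  simp only [heq, intervalIntegral.integral_const_mul, intervalIntegral.integral_neg] at h
  linarith

/-- No solution with positive speed is nondecreasing in `x` and tends to `1` as `x → ∞`. -/
theorem false_of_tendsto_one (hu : IsSolution F c u) (hF : BalancedDoubleWell F) (hc : 0 < c)
    (hx : ∀ x y, 0 ≤ pdx u x y) (hr : ∀ y, Tendsto (fun x => u x y) atTop (nhds 1)) : False := by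
  obtain ⟨K, hK0, hK⟩ := hF.exists_lipschitz
  obtain ⟨A, hA0, hxA, hyA⟩ := hu.exists_partials_le hF
  have hpy := hu.2.2.2
  have hu1 : ∀ x y, u x y ≤ 1 := fun x y => (abs_le.1 (hu.2.2.1 x y)).2
  have hlt : u 0 0 < 1 := (hu.strictMono 0 one_pos).trans_le (hu1 0 1)
  obtain ⟨X₀, hX, hX0⟩ := (((hr 0).eventually_const_lt hlt).and (eventually_gt_atTop 0)).exists
  have hcp : ∀ y, Continuous fun x => pdx u x y * pdy u x y := fun y =>
    (hu.continuous_pdx_fst y).mul (hu.continuous_pdy_fst y)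
  set p := ∫ x in (0 : ℝ)..X₀, pdx u x 0 * pdy u x 0 with hp
  have hp0 : 0 < p := by
    obtain ⟨t, -, ht⟩ := (isCompact_Icc (a := (0 : ℝ)) (b := X₀)).exists_isMinOn
      ⟨0, by simp [hX0.le]⟩ (hu.continuous_pdy_fst 0).continuousOn
    have h1 : ∫ x in (0 : ℝ)..X₀, pdx u x 0 * pdy u t 0 ≤ p :=
      intervalIntegral.integral_mono_on hX0.le
        (((hu.continuous_pdx_fst 0).mul continuous_const).intervalIntegrable _ _)
        ((hcp 0).intervalIntegrable _ _)
        fun x hxI => mul_le_mul_of_nonneg_left (ht hxI) (hx x 0)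
    rw [intervalIntegral.integral_mul_const, hu.integral_pdx] at h1
    exact (mul_pos (sub_pos.2 hX) (hpy t 0)).trans_le h1
  obtain ⟨y₁, hy1, hy0⟩ : ∃ y₁, exp (c * y₁) * (A * 2) < p / 4 ∧ y₁ < 0 := by
    have : Tendsto (fun y => exp (c * y) * (A * 2)) atBot (nhds (0 * (A * 2))) :=
      (tendsto_exp_atBot.comp (tendsto_id.const_mul_atBot hc)).mul_const _
    rw [zero_mul] at this
    exact ((this.eventually_lt_const (by positivity : 0 < p / 4)).and (eventually_lt_atBot 0)).exists
  have hN : 0 < 6 * A * (0 - y₁) / p := div_pos (mul_pos (by positivity) (by linarith)) hp0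
  obtain ⟨x₁, hx₁, hslice⟩ := exists_slice_integral_pdx_le (hu.1.of_le (by norm_num)) hu.2.2.1 0
    hN hy0
  have hslice' : A / 2 * ∫ y in y₁..0, pdx u x₁ y ≤ p / 4 := by
    refine (mul_le_mul_of_nonneg_left hslice (by positivity)).trans_eq ?_
    have : 0 - y₁ ≠ 0 := by linarith
    field_simp
    norm_num
  obtain ⟨x₂, hx₂, hx₂X⟩ : ∃ x₂, (A / 2 + 2 * K * (0 - y₁)) * (1 - u x₂ y₁) < p / 4 ∧ X₀ < x₂ := by
    have : Tendsto (fun x => (A / 2 + 2 * K * (0 - y₁)) * (1 - u x y₁)) atTop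
        (nhds ((A / 2 + 2 * K * (0 - y₁)) * (1 - 1))) := ((hr y₁).const_sub 1).const_mul _
    rw [sub_self, mul_zero] at this
    exact ((this.eventually_lt_const (by positivity : 0 < p / 4)).and
      (eventually_gt_atTop X₀)).exists
  have hbal := hu.momentum_balance hF x₁ x₂ y₁ 0
  simp only [mul_zero, exp_zero, one_mul] at hbal
  have hx12 : x₁ ≤ x₂ := by linarith [hx₁.2]
  have hlow : p ≤ ∫ x in x₁..x₂, pdx u x 0 * pdy u x 0 :=
    intervalIntegral.integral_mono_interval hx₁.2 hX0.le hx₂X.le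
      (Filter.Eventually.of_forall fun x => mul_nonneg (hx x 0) (hpy x 0).le)
      ((hcp 0).intervalIntegrable _ _)
  have hterm1 : ∫ x in x₁..x₂, exp (c * y₁) * (pdx u x y₁ * pdy u x y₁) ≤
      exp (c * y₁) * (A * 2) := by
    rw [intervalIntegral.integral_const_mul]
    refine mul_le_mul_of_nonneg_left ?_ (exp_pos _).le
    calc ∫ x in x₁..x₂, pdx u x y₁ * pdy u x y₁ ≤ ∫ x in x₁..x₂, A * pdx u x y₁ :=
          intervalIntegral.integral_mono_on hx12 ((hcp y₁).intervalIntegrable _ _)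
            ((continuous_const.mul (hu.continuous_pdx_fst y₁)).intervalIntegrable _ _)
            fun x _ => by
              rw [mul_comm A]
              exact mul_le_mul_of_nonneg_left (hyA x y₁) (hx x y₁)
      _ = A * (u x₂ y₁ - u x₁ y₁) := by
          rw [intervalIntegral.integral_const_mul, hu.integral_pdx]
      _ ≤ A * 2 := mul_le_mul_of_nonneg_left (hu.sub_le_two _ _ _ _) hA0.le
  have hce : ∀ x, Continuous fun y =>
      exp (c * y) * (pdx u x y ^ 2 / 2 - pdy u x y ^ 2 / 2 - F (u x y)) := fun x => by
    have h1 := hu.continuous_pdx_snd x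
    have h2 := hu.continuous_pdy_snd x
    have h3 := hF.1.continuous.comp (hu.continuous_snd x)
    exact (continuous_exp.comp (continuous_const.mul continuous_id)).mul
      ((((h1.pow 2).div_const 2).sub ((h2.pow 2).div_const 2)).sub h3)
  have hexp1 : ∀ y ∈ Set.Icc y₁ 0, exp (c * y) ≤ 1 := fun y hy =>
    exp_le_one_iff.2 (mul_nonpos_of_nonneg_of_nonpos hc.le hy.2)
  have hterm2 : ∫ y in y₁..0, exp (c * y) * (pdx u x₁ y ^ 2 / 2 - pdy u x₁ y ^ 2 / 2 - F (u x₁ y))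
      ≤ A / 2 * ∫ y in y₁..0, pdx u x₁ y := by
    rw [← intervalIntegral.integral_const_mul]
    refine intervalIntegral.integral_mono_on hy0.le ((hce x₁).intervalIntegrable _ _)
      ((continuous_const.mul (hu.continuous_pdx_snd x₁)).intervalIntegrable _ _) fun y hy => ?_
    have h1 := hF.nonneg (hu.2.2.1 x₁ y)
    have h2 := mul_le_mul_of_nonneg_left (hxA x₁ y) (hx x₁ y)
    calc _ ≤ exp (c * y) * (A / 2 * pdx u x₁ y) := by
          refine mul_le_mul_of_nonneg_left ?_ (exp_pos _).le
          nlinarith [sq_nonneg (pdy u x₁ y)]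
      _ ≤ 1 * (A / 2 * pdx u x₁ y) :=
          mul_le_mul_of_nonneg_right (hexp1 y hy) (mul_nonneg (by positivity) (hx x₁ y))
      _ = _ := one_mul _
  have hterm3 : -(∫ y in y₁..0,
      exp (c * y) * (pdx u x₂ y ^ 2 / 2 - pdy u x₂ y ^ 2 / 2 - F (u x₂ y))) ≤
      (A / 2 + 2 * K * (0 - y₁)) * (1 - u x₂ y₁) := by
    rw [← intervalIntegral.integral_neg]
    calc _ ≤ ∫ y in y₁..0, (A / 2 * pdy u x₂ y + 2 * K * (1 - u x₂ y₁)) := by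
          refine intervalIntegral.integral_mono_on hy0.le ((hce x₂).neg.intervalIntegrable _ _)
            (((continuous_const.mul (hu.continuous_pdy_snd x₂)).add
              continuous_const).intervalIntegrable _ _) fun y hy => ?_
          have h1 := hF.nonneg (hu.2.2.1 x₂ y)
          have h2 := mul_le_mul_of_nonneg_left (hyA x₂ y) (hpy x₂ y).le
          have h3 := hu.potential_le hF hK0 hK x₂ y
          have h4 := mul_le_mul_of_nonneg_left
            (sub_le_sub_left ((hu.strictMono x₂).monotone hy.1) 1) (by positivity : 0 ≤ 2 * K)
          have h5 : 0 ≤ A / 2 * pdy u x₂ y + 2 * K * (1 - u x₂ y₁) :=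
            add_nonneg (mul_nonneg (by positivity) (hpy x₂ y).le)
              (mul_nonneg (by positivity) (by linarith [hu1 x₂ y₁]))
          calc _ = exp (c * y) * (-(pdx u x₂ y ^ 2 / 2) + pdy u x₂ y ^ 2 / 2 + F (u x₂ y)) := by
                ring
            _ ≤ exp (c * y) * (A / 2 * pdy u x₂ y + 2 * K * (1 - u x₂ y₁)) := by
                refine mul_le_mul_of_nonneg_left ?_ (exp_pos _).le
                nlinarith [sq_nonneg (pdx u x₂ y)]
            _ ≤ 1 * _ := mul_le_mul_of_nonneg_right (hexp1 y hy) h5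
            _ = _ := one_mul _
      _ = A / 2 * (u x₂ 0 - u x₂ y₁) + 2 * K * (1 - u x₂ y₁) * (0 - y₁) := by
          rw [intervalIntegral.integral_add
            (((hu.continuous_pdy_snd x₂).intervalIntegrable _ _).const_mul _) (by simp),
            intervalIntegral.integral_const_mul, hu.integral_pdy, intervalIntegral.integral_const,
            smul_eq_mul]
          ring
      _ ≤ _ := by nlinarith [hu1 x₂ 0]
  linarith

/-- If the upper limit profile tends to `1` as `x → ∞`, then so does every horizontal slice. -/
theorem tendsto_one_of_upper_limit (hu : IsSolution F c u) (hF : BalancedDoubleWell F) (hc : 0 < c)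
    (hx : ∀ x y, 0 ≤ pdx u x y) {v : ℝ → ℝ} (hv : ∀ x, Tendsto (fun y => u x y) atTop (nhds (v x)))
    (hv1 : Tendsto v atTop (nhds 1)) (y₀ : ℝ) : Tendsto (fun x => u x y₀) atTop (nhds 1) := by
  obtain ⟨K, hK0, hK⟩ := hF.exists_lipschitz
  obtain ⟨A, hA0, hxA, hyA⟩ := hu.exists_partials_le hF
  have hpy := hu.2.2.2
  have hu1 : ∀ x y, u x y ≤ 1 := fun x y => (abs_le.1 (hu.2.2.1 x y)).2
  have hmx := hu.monotone_fst hx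
  refine tendsto_order.2 ⟨fun a ha => ?_, fun a ha => Eventually.of_forall fun x =>
    (hu1 x y₀).trans_lt ha⟩
  by_contra hcon
  have hle : ∀ x, u x y₀ ≤ a := fun x => by
    by_contra! h
    exact hcon ((eventually_ge_atTop x).mono fun t ht => h.trans_le (hmx y₀ ht))
  set d := (1 - a) / 2 with hd
  have hd0 : 0 < d := by linarith
  obtain ⟨X₀, hX₀⟩ := (hv1.eventually_const_lt (by linarith : 1 - d < 1)).exists
  obtain ⟨y₃, hy₃, hy03⟩ := (((hv X₀).eventually_const_lt hX₀).and (eventually_gt_atTop y₀)).exists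
  have hgap : ∀ x, X₀ ≤ x → d ≤ u x y₃ - u x y₀ := fun x hxX => by
    have h1 : u X₀ y₃ ≤ u x y₃ := hmx y₃ hxX
    linarith [hle x]
  set h := y₃ - y₀ with hh
  have hh0 : 0 < h := by linarith
  set γ := c * (d ^ 2 / h) with hγ
  have hγ0 : 0 < γ := by positivity
  set L := 12 * A / γ + 1 with hL
  have hL0 : 0 < L := by positivity
  obtain ⟨x₁, hx₁, hx₁X⟩ : ∃ x₁, 2 * K * (1 - v x₁) < γ / 4 ∧ X₀ < x₁ := by
    have : Tendsto (fun x => 2 * K * (1 - v x)) atTop (nhds (2 * K * (1 - 1))) :=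
      (hv1.const_sub 1).const_mul _
    rw [sub_self, mul_zero] at this
    exact ((this.eventually_lt_const (by positivity : 0 < γ / 4)).and
      (eventually_gt_atTop X₀)).exists
  obtain ⟨y₂, hy₂, hy32⟩ : ∃ y₂, 2 * K * (1 - u x₁ y₂) < γ / 4 ∧ y₃ < y₂ := by
    have : Tendsto (fun y => 2 * K * (1 - u x₁ y)) atTop (nhds (2 * K * (1 - v x₁))) :=
      ((hv x₁).const_sub 1).const_mul _
    exact ((this.eventually_lt_const hx₁).and (eventually_gt_atTop y₃)).exists
  have hN : 0 < 6 * A / γ := by positivity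
  set x₂ := x₁ + L with hx₂
  have hx12 : x₁ < x₂ := by linarith
  obtain ⟨y₁, hy₁, hslice⟩ := exists_slice_integral_pdx_le (u := fun x y => u y x)
    ((hu.1.of_le (by norm_num)).comp (contDiff_snd.prodMk contDiff_fst))
    (fun x y => hu.2.2.1 y x) y₀ hN hx12
  have hslice' : A / 2 * ∫ x in x₁..x₂, pdy u x y₁ ≤ γ / 4 * L := by
    refine (mul_le_mul_of_nonneg_left hslice (by positivity)).trans_eq ?_
    have : x₂ - x₁ = L := by rw [hx₂]; ring
    rw [this]
    field_simp
    norm_num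
  have hy12 : y₁ ≤ y₂ := by linarith [hy₁.2]
  have hbal := hu.energy_balance hF x₁ x₂ y₁ y₂
  have hcsq : Continuous fun p : ℝ × ℝ => pdy u p.1 p.2 ^ 2 := hu.contDiff_pdy.continuous.pow 2
  have hlow : γ * L ≤ c * ∫ x in x₁..x₂, ∫ y in y₁..y₂, pdy u x y ^ 2 := by
    rw [hγ, mul_assoc]
    refine mul_le_mul_of_nonneg_left ?_ hc.le
    calc d ^ 2 / h * L = ∫ x in x₁..x₂, d ^ 2 / h := by
          rw [intervalIntegral.integral_const, smul_eq_mul, hx₂]; ring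
      _ ≤ _ := by
          refine intervalIntegral.integral_mono_on hx12.le (by simp)
            ((intervalIntegral.continuous_parametric_intervalIntegral_of_continuous' hcsq _
              _).intervalIntegrable _ _) fun x hxI => ?_
          have hsq : Continuous fun y => pdy u x y ^ 2 := (hu.continuous_pdy_snd x).pow 2
          calc d ^ 2 / h ≤ 2 * (d / h) * (u x y₃ - u x y₀) - (d / h) ^ 2 * h := by
                have := mul_le_mul_of_nonneg_left (hgap x (by linarith [hxI.1]))
                  (by positivity : 0 ≤ 2 * (d / h))
                have e1 : (d / h) ^ 2 * h = d ^ 2 / h := by field_simp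
                have e2 : 2 * (d / h) * d = 2 * (d ^ 2 / h) := by ring
                linarith
            _ = ∫ y in y₀..y₃, (2 * (d / h) * pdy u x y - (d / h) ^ 2) := by
                rw [intervalIntegral.integral_sub
                  (((hu.continuous_pdy_snd x).intervalIntegrable _ _).const_mul _)
                  (by simp), intervalIntegral.integral_const_mul, hu.integral_pdy,
                  intervalIntegral.integral_const, smul_eq_mul, ← hh]
                ring
            _ ≤ ∫ y in y₀..y₃, pdy u x y ^ 2 := by
                refine intervalIntegral.integral_mono_on hy03.le
                  (((continuous_const.mul (hu.continuous_pdy_snd x)).sub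
                    continuous_const).intervalIntegrable _ _)
                  (hsq.intervalIntegrable _ _) fun y _ => ?_
                linarith [sq_nonneg (pdy u x y - d / h)]
            _ ≤ ∫ y in y₁..y₂, pdy u x y ^ 2 :=
                intervalIntegral.integral_mono_interval hy₁.2 hy03.le hy32.le
                  (Filter.Eventually.of_forall fun y => sq_nonneg _) (hsq.intervalIntegrable _ _)
  have hcq : ∀ y, Continuous fun x => pdx u x y ^ 2 / 2 - pdy u x y ^ 2 / 2 + F (u x y) :=
    fun y => ((((hu.continuous_pdx_fst y).pow 2).div_const 2).sub
      (((hu.continuous_pdy_fst y).pow 2).div_const 2)).add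
      (hF.1.continuous.comp (hu.continuous_fst y))
  have hterm1 : ∫ x in x₁..x₂, (pdx u x y₂ ^ 2 / 2 - pdy u x y₂ ^ 2 / 2 + F (u x y₂)) ≤
      A + γ / 4 * L := by
    calc _ ≤ ∫ x in x₁..x₂, (A / 2 * pdx u x y₂ + γ / 4) := by
          refine intervalIntegral.integral_mono_on hx12.le ((hcq y₂).intervalIntegrable _ _)
            (((continuous_const.mul (hu.continuous_pdx_fst y₂)).add
              continuous_const).intervalIntegrable _ _) fun x hxI => ?_
          have h2 := mul_le_mul_of_nonneg_left (hxA x y₂) (hx x y₂)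
          have h3 := hu.potential_le hF hK0 hK x y₂
          have h4 := mul_le_mul_of_nonneg_left
            (sub_le_sub_left (hmx y₂ hxI.1) 1) (by positivity : 0 ≤ 2 * K)
          simp only at h4
          nlinarith [sq_nonneg (pdy u x y₂)]
      _ = A / 2 * (u x₂ y₂ - u x₁ y₂) + γ / 4 * L := by
          rw [intervalIntegral.integral_add
            (((hu.continuous_pdx_fst y₂).intervalIntegrable _ _).const_mul _) (by simp),
            intervalIntegral.integral_const_mul, hu.integral_pdx, intervalIntegral.integral_const,
            smul_eq_mul, hx₂]
          ring
      _ ≤ _ := by nlinarith [hu.sub_le_two x₂ y₂ x₁ y₂]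
  have hterm2 : -(∫ x in x₁..x₂, (pdx u x y₁ ^ 2 / 2 - pdy u x y₁ ^ 2 / 2 + F (u x y₁))) ≤
      A / 2 * ∫ x in x₁..x₂, pdy u x y₁ := by
    rw [← intervalIntegral.integral_neg, ← intervalIntegral.integral_const_mul]
    refine intervalIntegral.integral_mono_on hx12.le ((hcq y₁).neg.intervalIntegrable _ _)
      ((continuous_const.mul (hu.continuous_pdy_fst y₁)).intervalIntegrable _ _) fun x _ => ?_
    have h1 := hF.nonneg (hu.2.2.1 x y₁)
    have h2 := mul_le_mul_of_nonneg_left (hyA x y₁) (hpy x y₁).le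
    nlinarith [sq_nonneg (pdx u x y₁)]
  have hcp : ∀ x, Continuous fun y => pdx u x y * pdy u x y := fun x =>
    (hu.continuous_pdx_snd x).mul (hu.continuous_pdy_snd x)
  have hterm3 : ∫ y in y₁..y₂, pdx u x₁ y * pdy u x₁ y ≤ A * 2 := by
    calc _ ≤ ∫ y in y₁..y₂, A * pdy u x₁ y :=
          intervalIntegral.integral_mono_on hy12 ((hcp x₁).intervalIntegrable _ _)
            ((continuous_const.mul (hu.continuous_pdy_snd x₁)).intervalIntegrable _ _)
            fun y _ => mul_le_mul_of_nonneg_right (hxA x₁ y) (hpy x₁ y).le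
      _ = A * (u x₁ y₂ - u x₁ y₁) := by
          rw [intervalIntegral.integral_const_mul, hu.integral_pdy]
      _ ≤ A * 2 := mul_le_mul_of_nonneg_left (hu.sub_le_two _ _ _ _) hA0.le
  have hterm4 : 0 ≤ ∫ y in y₁..y₂, pdx u x₂ y * pdy u x₂ y :=
    intervalIntegral.integral_nonneg hy12 fun y _ => mul_nonneg (hx x₂ y) (hpy x₂ y).le
  have hγL : γ * L = 12 * A + γ := by rw [hL]; field_simp
  linarith

end IsSolution

/-- A property that is monotone in a parameter and holds locally holds uniformly on intervals. -/
theorem exists_uniform_of_local {p : ℝ → ℝ → Prop} {a b : ℝ}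
    (hp : ∀ Y Z x, Y ≤ Z → p Y x → p Z x)
    (hloc : ∀ x ∈ Set.Icc a b, ∃ Y, ∀ᶠ t in nhds x, p Y t) : ∃ Y, ∀ x ∈ Set.Icc a b, p Y x := by
  refine isCompact_Icc.induction_on (p := fun s => ∃ Y, ∀ x ∈ s, p Y x) ⟨0, by simp⟩ ?_ ?_ ?_
  · rintro s t hst ⟨Y, hY⟩
    exact ⟨Y, fun x hx => hY x (hst hx)⟩
  · rintro s t ⟨Y, hY⟩ ⟨Z, hZ⟩
    refine ⟨max Y Z, fun x hx => hx.elim (fun h => ?_) fun h => ?_⟩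
    · exact hp _ _ _ (le_max_left _ _) (hY x h)
    · exact hp _ _ _ (le_max_right _ _) (hZ x h)
  · intro x hx
    obtain ⟨Y, hY⟩ := hloc x hx
    exact ⟨_, mem_nhdsWithin_of_mem_nhds hY, Y, fun t ht => ht⟩

/-- A solution increasing in `y`, with an increasing profile as upper limit and either `-1` or an
increasing profile as lower limit, is nondecreasing in `x`. -/
theorem monotone_fst_of_limits {u ux uy uxx uyy : ℝ → ℝ → ℝ} {f v w : ℝ → ℝ} {c K κ δ : ℝ}
    (h : HasPurePartials u ux uy uxx uyy)
    (heq : ∀ x y, uxx x y + uyy x y + c * uy x y = f (u x y))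
    (hu : ∀ x y, |u x y| ≤ 1) (hmono : ∀ x, StrictMono (u x)) (hK : 0 ≤ K)
    (hlip : ∀ a b, -1 ≤ b → b ≤ a → a ≤ 1 → |f a - f b| ≤ K * (a - b)) (hκ : 0 < κ) (hδ : 0 < δ)
    (hκf : ∀ a b, -1 ≤ b → b ≤ a → a ≤ -1 + δ → κ * (a - b) ≤ f a - f b)
    (hv : ∀ x, Tendsto (fun y => u x y) atTop (nhds (v x)))
    (hw : ∀ x, Tendsto (fun y => u x y) atBot (nhds (w x)))
    (hvc : Continuous v) (hvm : StrictMono v) (hvb : Tendsto v atBot (nhds (-1)))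
    (hwc : Continuous w) (hwm : ∀ a b, a < b → w a = -1 ∨ w a < w b) (y : ℝ) :
    Monotone fun x => u x y := by
  have huv : ∀ x y, u x y ≤ v x := fun x y => (hmono x).monotone.ge_of_tendsto (hv x) y
  have hwu : ∀ x y, w x ≤ u x y := fun x y => (hmono x).monotone.le_of_tendsto (hw x) y
  have hc1 : ∀ y, Continuous fun x => u x y := fun y =>
    h.cont.comp (f := fun x : ℝ => (x, y)) (by fun_prop)
  intro a b hab
  set l := (a + b) / 2 with hl
  have hb : b = 2 * l - a := by rw [hl]; ring
  have hε : 0 < 1 / (6 * K + 3) := by positivity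
  have key := le_reflection_of_sliding (l := l) h heq hu hmono hK hlip hκ hκf ?_ ?_ ?_ a y
    (by linarith)
  · simpa only [← hb] using key
  · obtain ⟨m, hm⟩ := eventually_atBot.1 (hvb.eventually_lt_const (by linarith : -1 < -1 + δ))
    exact ⟨-m, fun x hx y => (huv x y).trans (hm x (by linarith)).le⟩
  · intro M
    obtain ⟨Y, hY⟩ := exists_uniform_of_local (p := fun Y x => v x < u (2 * l - x) Y)
      (a := -M) (b := l - 1 / (6 * K + 3))
      (fun Y Z x hYZ hp => hp.trans_le ((hmono _).monotone hYZ)) fun x hx => by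
        have hlt : v x < v (2 * l - x) := hvm (by linarith [hx.2])
        obtain ⟨Y, hY⟩ := ((hv (2 * l - x)).eventually_const_lt hlt).exists
        exact ⟨Y, hvc.continuousAt.eventually_lt
          ((hc1 Y).comp (continuous_const.sub continuous_id)).continuousAt hY⟩
    exact ⟨Y, fun x hx y => (huv x y).trans (hY x hx).le⟩
  · intro M
    obtain ⟨Y, hY⟩ := exists_uniform_of_local
      (p := fun Y x => u x (-Y) < -1 + δ ∨ u x (-Y) < w (2 * l - x))
      (a := -M) (b := l - 1 / (6 * K + 3))
      (fun Y Z x hYZ hp => hp.imp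
        (fun hp => ((hmono x).monotone (neg_le_neg hYZ)).trans_lt hp)
        fun hp => ((hmono x).monotone (neg_le_neg hYZ)).trans_lt hp) fun x hx => by
        rcases hwm x (2 * l - x) (by linarith [hx.2]) with h1 | h1
        · have hlt : w x < -1 + δ := by linarith
          obtain ⟨Y, hY⟩ := ((hw x).eventually_lt_const hlt).exists
          refine ⟨-Y, ((hc1 Y).continuousAt.eventually_lt continuousAt_const hY).mono
            fun t ht => Or.inl ?_⟩
          rwa [neg_neg]
        · obtain ⟨Y, hY⟩ := ((hw x).eventually_lt_const h1).exists
          refine ⟨-Y, ((hc1 Y).continuousAt.eventually_lt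
            (hwc.comp (continuous_const.sub continuous_id)).continuousAt hY).mono
            fun t ht => Or.inr ?_⟩
          rwa [neg_neg]
    refine ⟨Y, fun x hx y hy => (hY x hx).imp (fun h1 => ?_) fun h1 => ?_⟩
    · exact ((hmono x).monotone hy).trans h1.le
    · exact ((hmono x).monotone hy).trans (h1.le.trans (hwu _ _))

theorem pdx_nonneg_of_monotone {u : ℝ → ℝ → ℝ} (hm : ∀ y, Monotone fun x => u x y) (x y : ℝ) :
    0 ≤ pdx u x y :=
  (hm y).deriv_nonneg

namespace IsSolution

variable {F : ℝ → ℝ} {c : ℝ} {u : ℝ → ℝ → ℝ}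

theorem reflect_fst (hu : IsSolution F c u) : IsSolution F c fun x y => u (-x) y := by
  have hx : ∀ x y, pdx (fun x y => u (-x) y) x y = -pdx u (-x) y := fun x y =>
    deriv_comp_neg (f := fun t => u t y) x
  have hxx : ∀ x y, pdxx (fun x y => u (-x) y) x y = pdxx u (-x) y := fun x y => by
    simp only [pdxx, hx]
    rw [deriv.fun_neg, deriv_comp_neg (f := fun t => pdx u t y) x, neg_neg]
  refine ⟨hu.1.comp (f := fun p : ℝ × ℝ => (-p.1, p.2)) (by fun_prop), fun x y => ?_,
    fun x y => hu.2.2.1 (-x) y, fun x y => hu.2.2.2 (-x) y⟩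
  rw [hxx]
  exact hu.2.1 (-x) y

theorem false_of_upper_profile (hu : IsSolution F c u) (hF : BalancedDoubleWell F) (hc : 0 < c)
    {v w : ℝ → ℝ} (hv : ∀ x, Tendsto (fun y => u x y) atTop (nhds (v x)))
    (hw : ∀ x, Tendsto (fun y => u x y) atBot (nhds (w x)))
    (hvc : Continuous v) (hvm : StrictMono v) (hvb : Tendsto v atBot (nhds (-1)))
    (hvt : Tendsto v atTop (nhds 1))
    (hwc : Continuous w) (hwm : ∀ a b, a < b → w a = -1 ∨ w a < w b) : False := by
  obtain ⟨K, hK0, hK⟩ := hF.exists_lipschitz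
  obtain ⟨δ, hδ, κ, hκ, hslope⟩ :=
    exists_slope_lower_bound (hF.contDiff_deriv.of_le (by norm_num)) hF.2.2.2.1
  have hm := monotone_fst_of_limits hu.hasPurePartials hu.2.1 hu.2.2.1 hu.strictMono hK0 hK hκ hδ
    (fun a b h1 => hslope a b (by linarith)) hv hw hvc hvm hvb hwc hwm
  have hx := pdx_nonneg_of_monotone hm
  exact hu.false_of_tendsto_one hF hc hx (hu.tendsto_one_of_upper_limit hF hc hx hv hvt)

theorem false_of_lower_profile (hu : IsSolution F c u) (hF : BalancedDoubleWell F) (hc : 0 < c)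
    {w : ℝ → ℝ} (hv : ∀ x, Tendsto (fun y => u x y) atTop (nhds 1))
    (hw : ∀ x, Tendsto (fun y => u x y) atBot (nhds (w x)))
    (hwc : Continuous w) (hwm : StrictMono w) (hwt : Tendsto w atTop (nhds 1)) : False := by
  obtain ⟨K, hK0, hK⟩ := hF.exists_lipschitz
  obtain ⟨δ, hδ, κ, hκ, hslope⟩ :=
    exists_slope_lower_bound (hF.contDiff_deriv.of_le (by norm_num)) hF.2.2.2.2.1
  have hm := monotone_fst_of_limits (f := fun s => -deriv F (-s)) (c := -c)
    (v := fun x => -w (-x)) (w := fun _ => -1)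
    hu.hasPurePartials.point_reflect_neg
    (fun x y => by simp only [neg_neg, ← hu.2.1 (-x) (-y)]; ring)
    (fun x y => by simpa using hu.2.2.1 (-x) (-y))
    (fun x s t hst => neg_lt_neg (hu.strictMono (-x) (neg_lt_neg hst))) hK0
    (fun a b h1 h2 h3 => by
      have := hK (-b) (-a) (by linarith) (by linarith) (by linarith)
      rw [neg_sub_neg] at this
      simpa only [neg_sub_neg] using this) hκ hδ
    (fun a b h1 h2 h3 => by
      have := hslope (-b) (-a) (by linarith) (by linarith) (by linarith)
      linarith)
    (fun x => ((hw (-x)).comp tendsto_neg_atTop_atBot).neg)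
    (fun x => ((hv (-x)).comp tendsto_neg_atBot_atTop).neg)
    (hwc.comp continuous_neg).neg (fun s t hst => neg_lt_neg (hwm (neg_lt_neg hst)))
    (hwt.comp tendsto_neg_atBot_atTop).neg continuous_const (fun _ _ _ => Or.inl rfl)
  have hx := pdx_nonneg_of_monotone (u := u) fun y s t hst => by
    have := hm (-y) (neg_le_neg hst)
    simpa using this
  refine hu.false_of_tendsto_one hF hc hx fun y => ?_
  exact tendsto_of_tendsto_of_tendsto_of_le_of_le hwt tendsto_const_nhds
    (fun x => (hu.strictMono x).monotone.le_of_tendsto (hw x) y)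
    fun x => (abs_le.1 (hu.2.2.1 x y)).2

theorem false_of_increasing_profile (hu : IsSolution F c u) (hF : BalancedDoubleWell F)
    {g : ℝ → ℝ} (hg : ContDiff ℝ 3 g) (hgeq : ∀ s : ℝ, deriv (deriv g) s = deriv F (g s))
    (hgtop : Tendsto g atTop (nhds 1)) (hgbot : Tendsto g atBot (nhds (-1)))
    (hg0 : g 0 = 0) (hc : 0 < c) {uP uM : ℝ → ℝ}
    (hP : ∀ x : ℝ, Tendsto (fun y => u x y) atTop (nhds (uP x)))
    (hM : ∀ x : ℝ, Tendsto (fun y => u x y) atBot (nhds (uM x)))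
    (hcases : (∃ K₁ : ℝ, (∀ x, uP x = g (x - K₁)) ∧ (∀ x, uM x = -1)) ∨
       (∃ K₂ : ℝ, (∀ x, uP x = 1) ∧ (∀ x, uM x = g (x - K₂))) ∨
       (∃ K₁ K₂ : ℝ, K₁ < K₂ ∧
         (∀ x, uP x = g (x - K₁)) ∧ (∀ x, uM x = g (x - K₂)))) : False := by
  have hPb : ∀ x, |uP x| ≤ 1 := fun x =>
    le_of_tendsto (hP x).abs (Eventually.of_forall fun y => hu.2.2.1 x y)
  have hMb : ∀ x, |uM x| ≤ 1 := fun x =>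
    le_of_tendsto (hM x).abs (Eventually.of_forall fun y => hu.2.2.1 x y)
  have hgb : ∀ s, |g s| ≤ 1 := fun s => by
    rcases hcases with ⟨K, h, -⟩ | ⟨K, -, h⟩ | ⟨K, -, -, h, -⟩
    · simpa [h] using hPb (s + K)
    · simpa [h] using hMb (s + K)
    · simpa [h] using hPb (s + K)
  have hgm := strictMono_of_standing_wave hF hg hgeq hgtop hg0 hgb
  have hsc : ∀ K, Continuous fun x => g (x - K) := fun K =>
    hg.continuous.comp (continuous_id.sub continuous_const)
  have hsm : ∀ K, StrictMono fun x => g (x - K) := fun K s t hst => hgm (by linarith)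
  have hst : ∀ K, Tendsto (fun x => g (x - K)) atTop (nhds 1) := fun K =>
    hgtop.comp (tendsto_atTop_add_const_right _ (-K) tendsto_id)
  have hsb : ∀ K, Tendsto (fun x => g (x - K)) atBot (nhds (-1)) := fun K =>
    hgbot.comp (tendsto_atBot_add_const_right _ (-K) tendsto_id)
  rcases hcases with ⟨K, h1, h2⟩ | ⟨K, h1, h2⟩ | ⟨K, K', -, h1, h2⟩
  · simp only [h1, h2] at hP hM
    exact hu.false_of_upper_profile hF hc hP hM (hsc K) (hsm K) (hsb K) (hst K) continuous_const
      fun _ _ _ => Or.inl rfl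
  · simp only [h1, h2] at hP hM
    exact hu.false_of_lower_profile hF hc hP hM (hsc K) (hsm K) (hst K)
  · simp only [h1, h2] at hP hM
    exact hu.false_of_upper_profile hF hc hP hM (hsc K) (hsm K) (hsb K) (hst K) (hsc K')
      fun _ _ h => Or.inr (hsm K' h)

end IsSolution

/-- Nonexistence of monotone traveling waves of the balanced Allen-Cahn
equation connecting a one-dimensional standing wave profile (Theorem 4.1):
none of the six limit configurations involving a reflection/translation of
`g` can occur. -/
theorem no_wave_connecting_standing_profile
    (F : ℝ → ℝ) (hF : BalancedDoubleWell F)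
    (g : ℝ → ℝ) (hg : ContDiff ℝ 3 g)
    (hgeq : ∀ s : ℝ, deriv (deriv g) s = deriv F (g s))
    (hgtop : Tendsto g atTop (nhds 1)) (hgbot : Tendsto g atBot (nhds (-1)))
    (hg0 : g 0 = 0)
    (c : ℝ) (hc : 0 < c) :
    ¬ ∃ (u : ℝ → ℝ → ℝ) (uP uM : ℝ → ℝ),
      IsSolution F c u ∧
      (∀ x : ℝ, Tendsto (fun y => u x y) atTop (nhds (uP x))) ∧
      (∀ x : ℝ, Tendsto (fun y => u x y) atBot (nhds (uM x))) ∧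
      ((∃ K₁ : ℝ, (∀ x, uP x = g (x - K₁)) ∧ (∀ x, uM x = -1)) ∨
       (∃ K₁ : ℝ, (∀ x, uP x = g (K₁ - x)) ∧ (∀ x, uM x = -1)) ∨
       (∃ K₂ : ℝ, (∀ x, uP x = 1) ∧ (∀ x, uM x = g (x - K₂))) ∨
       (∃ K₂ : ℝ, (∀ x, uP x = 1) ∧ (∀ x, uM x = g (K₂ - x))) ∨
       (∃ K₁ K₂ : ℝ, K₁ < K₂ ∧
         (∀ x, uP x = g (x - K₁)) ∧ (∀ x, uM x = g (x - K₂))) ∨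
       (∃ K₁ K₂ : ℝ, K₂ < K₁ ∧
         (∀ x, uP x = g (K₁ - x)) ∧ (∀ x, uM x = g (K₂ - x)))) := by
  rintro ⟨u, uP, uM, hu, hP, hM, h | ⟨K, h1, h2⟩ | h | ⟨K, h1, h2⟩ | h | ⟨K, K', hK, h1, h2⟩⟩
  · exact hu.false_of_increasing_profile hF hg hgeq hgtop hgbot hg0 hc hP hM (Or.inl h)
  · refine hu.reflect_fst.false_of_increasing_profile hF hg hgeq hgtop hgbot hg0 hc
      (fun x => hP (-x)) (fun x => hM (-x)) (Or.inl ⟨-K, fun x => ?_, fun x => h2 _⟩)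
    rw [h1]; ring_nf
  · exact hu.false_of_increasing_profile hF hg hgeq hgtop hgbot hg0 hc hP hM (Or.inr (Or.inl h))
  · refine hu.reflect_fst.false_of_increasing_profile hF hg hgeq hgtop hgbot hg0 hc
      (fun x => hP (-x)) (fun x => hM (-x)) (Or.inr (Or.inl ⟨-K, fun x => h1 _, fun x => ?_⟩))
    rw [h2]; ring_nf
  · exact hu.false_of_increasing_profile hF hg hgeq hgtop hgbot hg0 hc hP hM (Or.inr (Or.inr h))
  · refine hu.reflect_fst.false_of_increasing_profile hF hg hgeq hgtop hgbot hg0 hc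
      (fun x => hP (-x)) (fun x => hM (-x))
      (Or.inr (Or.inr ⟨-K, -K', neg_lt_neg hK, fun x => ?_, fun x => ?_⟩))
    · rw [h1]; ring_nf
    · rw [h2]; ring_nf
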